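/- arXiv:2509.03197 — 3 statements merged into one kernel-verified Lean document; each statement's English description precedes it below -/
import Mathlib

section
/- Let n ≥ 1, let U ⊆ ℝⁿ be an open connected set, let T := {z ∈ ℂⁿ : (Re z₁,…,Re zₙ) ∈ U} and T′ := {z ∈ ℂⁿ : (Re z₁,…,Re zₙ) ∈ convexHull(U)}. Let g and h be holomorphic functions on T′. If |g(z)| ≤ |h(z)| and h(z) ≠ 0 for every z ∈ T, then |g(z)| ≤ |h(z)| for every z ∈ T′. -/
open Set Filter Topology Metric

lemma core2 (F : ℂ × ℂ → ℂ)
    (hd : ∀ p : ℂ × ℂ, |p.2.re| ≤ p.1.re → p.1.re ≤ 1 → DifferentiableAt ℂ F p)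
    (hb : ∀ p : ℂ × ℂ, |p.2.re| = p.1.re → p.1.re ≤ 1 → F p ≠ 0)
    (u v : ℝ) (huv : |v| ≤ u) (hu : u < 1) : F ((u : ℂ), (v : ℂ)) ≠ 0 := by
  intro hF0
  have hv1 : |v| < 1 := lt_of_le_of_lt huv hu
  have hvv : v ^ 2 < 1 := by
    rw [← sq_abs]; nlinarith [abs_nonneg v]
  obtain ⟨ε, hε0, hεu⟩ : ∃ ε : ℝ, 0 < ε ∧ u + ε < 1 := ⟨(1 - u) / 2, by linarith, by linarith⟩
  set c0 : ℝ := u + ε * (1 - v ^ 2) with hc0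
  have hc01 : c0 < 1 := by nlinarith [sq_nonneg v]
  have hc0u : u ≤ c0 := by nlinarith
  let R : ℝ × ℂ → ℝ := fun q => q.1 + ε * (q.2.re ^ 2 - q.2.im ^ 2 - 1)
  let φ : ℝ × ℂ → ℂ × ℂ := fun q => ((q.1 : ℂ) + (ε : ℂ) * (q.2 ^ 2 - 1), q.2)
  have hφre : ∀ q, (φ q).1.re = R q := by
    intro q
    simp [φ, R, pow_two]
  have hφ2 : ∀ q, (φ q).2 = q.2 := fun q => rfl
  have hφc : Continuous φ := by fun_prop
  have hRc : Continuous R := by fun_prop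
  let S : Set (ℝ × ℂ) := {q | -1 ≤ q.1 ∧ q.1 ≤ c0 ∧ |q.2.re| ≤ 1 ∧ |q.2.re| ≤ R q}
  have hSR : ∀ q ∈ S, R q ≤ q.1 := by
    rintro q ⟨h1, h2, h3, h4⟩
    have : q.2.re ^ 2 ≤ 1 := by rw [← sq_abs]; nlinarith [abs_nonneg q.2.re]
    have : ε * (q.2.re ^ 2 - q.2.im ^ 2 - 1) ≤ 0 :=
      mul_nonpos_of_nonneg_of_nonpos hε0.le (by nlinarith [sq_nonneg q.2.im])
    simp only [R]; linarith
  have hSdiff : ∀ q ∈ S, DifferentiableAt ℂ F (φ q) := by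
    intro q hq
    apply hd
    · rw [hφre, hφ2]; exact hq.2.2.2
    · rw [hφre]; linarith [hSR q hq, hq.2.1]
  have hScl : IsClosed S := by
    have e1 : IsClosed {q : ℝ × ℂ | -1 ≤ q.1} := isClosed_le (by fun_prop) (by fun_prop)
    have e2 : IsClosed {q : ℝ × ℂ | q.1 ≤ c0} := isClosed_le (by fun_prop) (by fun_prop)
    have e3 : IsClosed {q : ℝ × ℂ | |q.2.re| ≤ 1} := isClosed_le (by fun_prop) (by fun_prop)
    have e4 : IsClosed {q : ℝ × ℂ | |q.2.re| ≤ R q} := isClosed_le (by fun_prop) hRc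
    exact e1.inter (e2.inter (e3.inter e4))
  have hSim : ∀ q ∈ S, |q.2.im| ≤ 1 / ε + 1 := by
    rintro q ⟨h1, h2, h3, h4⟩
    have h5 : q.2.re ^ 2 ≤ 1 := by rw [← sq_abs]; nlinarith [abs_nonneg q.2.re]
    have h6 : ε * q.2.im ^ 2 ≤ 1 := by
      have := abs_nonneg q.2.re
      have h7 : 0 ≤ R q := this.trans h4
      simp only [R] at h7
      nlinarith
    have h7 : q.2.im ^ 2 ≤ 1 / ε := by
      rw [le_div_iff₀ hε0]; linarith
    rw [← sq_abs] at h7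
    nlinarith [sq_nonneg (|q.2.im| - 1), abs_nonneg q.2.im]
  have hScomp : IsCompact S := by
    refine (((isCompact_Icc (a := (-1 : ℝ)) (b := c0)).prod
      (isCompact_closedBall (0 : ℂ) (1 + (1 / ε + 1))))).of_isClosed_subset hScl ?_
    intro q hq
    refine ⟨⟨hq.1, hq.2.1⟩, ?_⟩
    rw [mem_closedBall_zero_iff]
    exact (Complex.norm_le_abs_re_add_abs_im _).trans (add_le_add hq.2.2.1 (hSim q hq))
  have hGc : ContinuousOn (fun q => F (φ q)) S := fun q hq =>
    ((hSdiff q hq).continuousAt.comp hφc.continuousAt).continuousWithinAt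
  have hKcomp : IsCompact (S ∩ (fun q => F (φ q)) ⁻¹' {0}) :=
    hScomp.of_isClosed_subset (hGc.preimage_isClosed_of_isClosed hScl isClosed_singleton)
      inter_subset_left
  have hKne : (S ∩ (fun q => F (φ q)) ⁻¹' {0}).Nonempty := by
    have hR0 : R (c0, (v : ℂ)) = u := by simp [R, hc0]; ring
    refine ⟨(c0, (v : ℂ)), ⟨?_, le_rfl, ?_, ?_⟩, ?_⟩
    · have := abs_nonneg v
      show -1 ≤ c0
      linarith
    · simpa using hv1.le
    · rw [hR0]; simpa using huv
    · have : φ (c0, (v : ℂ)) = ((u : ℂ), (v : ℂ)) := by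
        simp only [φ, hc0, Prod.mk.injEq, and_true]
        push_cast; ring
      show F (φ (c0, (v : ℂ))) = 0
      rw [this]; exact hF0
  obtain ⟨⟨c1, ζ⟩, ⟨hS1, hz1⟩, hmin⟩ := hKcomp.exists_isMinOn hKne continuous_fst.continuousOn
  have hz1 : F (φ (c1, ζ)) = 0 := hz1
  have hbd : ∀ q ∈ S, |q.2.re| = R q → F (φ q) ≠ 0 := by
    intro q hq he
    apply hb
    · rw [hφre, hφ2]; exact he
    · rw [hφre]; linarith [hSR q hq, hq.2.1]
  have hBcomp : IsCompact (S ∩ {q | |q.2.re| = R q}) :=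
    hScomp.inter_right (isClosed_eq (by fun_prop) hRc)
  obtain ⟨C, hC⟩ := hBcomp.exists_bound_of_continuousOn (f := fun q => (F (φ q))⁻¹)
    (ContinuousOn.inv₀ (hGc.mono inter_subset_left) (fun q hq => hbd q hq.1 hq.2))
  have hc1nn : 0 ≤ c1 := by
    have h1 := hSR _ hS1
    have h2 := hS1.2.2.2
    have := abs_nonneg ζ.re
    simp only at h1 h2
    linarith
  have hc1c0 : c1 ≤ c0 := hS1.2.1
  have hRlt : |ζ.re| < R (c1, ζ) := by
    refine lt_of_le_of_ne hS1.2.2.2 ?_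
    intro he
    exact hbd _ hS1 he hz1
  have hrelt : |ζ.re| < 1 := by
    have := hSR _ hS1
    simp only at this
    linarith
  have key : ∀ c, -1 ≤ c → c < c1 → |ζ.re| < R (c, ζ) → 1 ≤ C * ‖F (φ (c, ζ))‖ := by
    intro c hcm hcc hcR
    let V : Set ℂ := {w | |w.re| < 1 ∧ |w.re| < R (c, w)}
    have hVo : IsOpen V :=
      (isOpen_lt (f := fun w : ℂ => |w.re|) (g := fun _ => (1 : ℝ)) (by fun_prop) (by fun_prop)).inter
        (isOpen_lt (f := fun w : ℂ => |w.re|) (g := fun w => R (c, w)) (by fun_prop) (by fun_prop))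
    have hVcl : ∀ w ∈ closure V, (c, w) ∈ S := by
      intro w hw
      have hcl : IsClosed {w : ℂ | (c, w) ∈ S} := hScl.preimage (by fun_prop)
      refine closure_minimal (s := V) ?_ hcl hw
      intro w hw
      exact ⟨hcm, by show c ≤ c0; linarith, hw.1.le, hw.2.le⟩
    have hne : ∀ w ∈ closure V, F (φ (c, w)) ≠ 0 := by
      intro w hw h0
      have : c1 ≤ c := hmin (show (c, w) ∈ _ from ⟨hVcl w hw, h0⟩)
      linarith
    have hdiff : ∀ w ∈ closure V, DifferentiableAt ℂ (fun w => (F (φ (c, w)))⁻¹) w := by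
      intro w hw
      have h1 : DifferentiableAt ℂ (fun w => φ (c, w)) w := by
        simp only [φ]; fun_prop
      have h2 : DifferentiableAt ℂ (fun w => F (φ (c, w))) w :=
        DifferentiableAt.comp (f := fun w => φ (c, w)) (g := F) w (hSdiff _ (hVcl w hw)) h1
      exact h2.inv (hne w hw)
    have hfr : ∀ w ∈ frontier V, ‖(F (φ (c, w)))⁻¹‖ ≤ C := by
      intro w hw
      rw [hVo.frontier_eq] at hw
      have hwS := hVcl w hw.1
      refine hC (c, w) ⟨hwS, ?_⟩
      have h1 := hSR _ hwS
      have h2 : |w.re| ≤ R (c, w) := hwS.2.2.2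
      simp only at h1
      by_contra hne'
      exact hw.2 ⟨by linarith, lt_of_le_of_ne h2 hne'⟩
    have hVb : Bornology.IsBounded V := by
      have : V ⊆ Prod.snd '' S := fun w hw => ⟨(c, w), hVcl w (subset_closure hw), rfl⟩
      exact (hScomp.image continuous_snd).isBounded.subset this
    have hζV : ζ ∈ closure V := subset_closure ⟨hrelt, hcR⟩
    have := Complex.norm_le_of_forall_mem_frontier_norm_le hVb
      (DifferentiableOn.diffContOnCl (fun w hw => (hdiff w hw).differentiableWithinAt)) hfr hζV
    have hpos : 0 < ‖F (φ (c, ζ))‖ := norm_pos_iff.2 (hne ζ hζV)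
    rw [norm_inv, inv_le_iff_one_le_mul₀ hpos] at this
    exact this
  have hlim : Tendsto (fun c : ℝ => C * ‖F (φ (c, ζ))‖) (𝓝[<] c1) (𝓝 (C * ‖F (φ (c1, ζ))‖)) := by
    have h1 : ContinuousAt (fun c : ℝ => F (φ (c, ζ))) c1 :=
      ContinuousAt.comp (f := fun c : ℝ => φ (c, ζ)) (g := F) (hSdiff _ hS1).continuousAt
        (by fun_prop)
    exact ((h1.norm).const_mul C).tendsto.mono_left nhdsWithin_le_nhds
  have hev : ∀ᶠ c in 𝓝[<] c1, 1 ≤ C * ‖F (φ (c, ζ))‖ := by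
    have h1 : ∀ᶠ c in 𝓝[<] c1, |ζ.re| < R (c, ζ) := by
      have : ContinuousAt (fun c : ℝ => R (c, ζ)) c1 := by fun_prop
      exact nhdsWithin_le_nhds (this.eventually (lt_mem_nhds hRlt))
    have h2 : ∀ᶠ c in 𝓝[<] c1, -1 < c := nhdsWithin_le_nhds (lt_mem_nhds (by linarith))
    filter_upwards [h1, h2, self_mem_nhdsWithin] with c h1 h2 h3
    exact key c h2.le h3 h1
  have := ge_of_tendsto hlim hev
  rw [hz1] at this
  simp at this
  linarith

/-- zero-free base points -/
def WW {n : ℕ} (Q : Set (Fin n → ℝ)) (H : (Fin n → ℂ) → ℂ) : Set (Fin n → ℝ) :=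
  {x | x ∈ Q ∧ ∀ z : Fin n → ℂ, (fun i => (z i).re) = x → H z ≠ 0}

lemma tri {n : ℕ} (Q : Set (Fin n → ℝ)) (hQ : IsOpen Q) (hQc : Convex ℝ Q)
    (H : (Fin n → ℂ) → ℂ)
    (hH : DifferentiableOn ℂ H {z : Fin n → ℂ | (fun i => (z i).re) ∈ Q})
    (a b c : Fin n → ℝ)
    (h1 : ∀ t : ℝ, 0 ≤ t → t ≤ 1 → b + t • (a - b) ∈ WW Q H)
    (h2 : ∀ t : ℝ, 0 ≤ t → t ≤ 1 → b + t • (c - b) ∈ WW Q H)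
    (s t : ℝ) (hs : 0 ≤ s) (ht : 0 ≤ t) (hst : s + t < 1) :
    b + s • (a - b) + t • (c - b) ∈ WW Q H := by
  have haQ : a ∈ Q := by have := (h1 1 zero_le_one le_rfl).1; simpa using this
  have hbQ : b ∈ Q := by have := (h1 0 le_rfl zero_le_one).1; simpa using this
  have hcQ : c ∈ Q := by have := (h2 1 zero_le_one le_rfl).1; simpa using this
  have hmem : ∀ s t : ℝ, 0 ≤ s → 0 ≤ t → s + t ≤ 1 → b + s • (a - b) + t • (c - b) ∈ Q := by
    intro s t hs ht hst
    rcases eq_or_lt_of_le (add_nonneg hs ht) with h0 | h0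
    · have hs0 : s = 0 := by linarith
      have ht0 : t = 0 := by linarith
      simpa [hs0, ht0] using hbQ
    · have hm : (s / (s + t)) • a + (t / (s + t)) • c ∈ Q :=
        hQc haQ hcQ (by positivity) (by positivity) (by field_simp)
      have := hQc hbQ hm (a := 1 - (s + t)) (b := s + t) (by linarith) h0.le (by ring)
      convert this using 1
      ext i
      simp
      field_simp
      ring
  refine ⟨hmem s t hs ht hst.le, ?_⟩
  intro z hz
  let Φ : ℂ × ℂ → (Fin n → ℂ) := fun p i =>
    (b i : ℂ) + ((p.1 + p.2) / 2) * ((a i - b i : ℝ) : ℂ) + ((p.1 - p.2) / 2) * ((c i - b i : ℝ) : ℂ)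
      + ((z i).im : ℂ) * Complex.I
  have hΦre : ∀ p, (fun i => (Φ p i).re) =
      b + ((p.1.re + p.2.re) / 2) • (a - b) + ((p.1.re - p.2.re) / 2) • (c - b) := by
    intro p; ext i
    simp [Φ, Complex.div_re, Complex.normSq]
  have hΦd : Differentiable ℂ Φ := by
    rw [differentiable_pi]; intro i; simp only [Φ]; fun_prop
  have hopen : IsOpen {z : Fin n → ℂ | (fun i => (z i).re) ∈ Q} :=
    hQ.preimage (by fun_prop)
  have hz' : z = Φ (((s + t : ℝ) : ℂ), ((s - t : ℝ) : ℂ)) := by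
    ext i
    have := congrFun hz i
    apply Complex.ext
    · have h2 := congrFun (hΦre (((s + t : ℝ) : ℂ), ((s - t : ℝ) : ℂ))) i
      simp only at h2 this
      rw [h2, this]
      simp
    · simp [Φ, Complex.div_im, Complex.normSq]
  rw [hz']
  refine core2 (fun p => H (Φ p)) ?_ ?_ (s + t) (s - t) ?_ hst
  · intro p hp hp1
    have hp' := abs_le.1 hp
    have : DifferentiableAt ℂ H (Φ p) := by
      refine hH.differentiableAt (hopen.mem_nhds ?_)
      show (fun i => (Φ p i).re) ∈ Q
      rw [hΦre]
      exact hmem _ _ (by linarith) (by linarith) (by linarith)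
    exact this.comp p (hΦd p)
  · intro p hp hp1
    rcases abs_choice p.2.re with h | h
    · have hnn : 0 ≤ p.2.re := by rw [← h]; exact abs_nonneg _
      refine (h1 p.1.re (by linarith) hp1).2 _ ?_
      rw [hΦre, ← hp, h]
      simp
    · have hnn : p.2.re ≤ 0 := by linarith [abs_nonneg p.2.re]
      refine (h2 p.1.re (by linarith) hp1).2 _ ?_
      rw [hΦre, ← hp, h]
      ext i
      simp
      ring
  · rw [abs_le]; constructor <;> linarith

lemma hyp {n : ℕ} (Q : Set (Fin n → ℝ)) (hQ : IsOpen Q) (hQc : Convex ℝ Q)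
    (H : (Fin n → ℂ) → ℂ)
    (hH : DifferentiableOn ℂ H {z : Fin n → ℂ | (fun i => (z i).re) ∈ Q})
    (P : Set (Fin n → ℝ)) (hP : IsOpen P) (hPW : P ⊆ WW Q H)
    (a b c : Fin n → ℝ) (h1 : segment ℝ b a ⊆ P) (h2 : segment ℝ b c ⊆ P) :
    segment ℝ a c ⊆ interior (WW Q H) := by
  have hcomp : ∀ x : Fin n → ℝ, IsCompact (segment ℝ b x) := by
    intro x
    rw [segment_eq_image']
    exact isCompact_Icc.image (by fun_prop)
  obtain ⟨δ, hδ, hδP⟩ := ((hcomp a).union (hcomp c)).exists_thickening_subset_open hP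
    (union_subset h1 h2)
  set N := ‖a - b‖ + ‖c - b‖ + 1 with hN
  have hNpos : 0 < N := by positivity
  set μ := δ / (2 * N) with hμ
  have hμpos : 0 < μ := by positivity
  have hμN : μ * N = δ / 2 := by rw [hμ]; field_simp
  have aux : ∀ (y e : Fin n → ℝ), ‖e‖ < δ / 2 → ‖y - b‖ ≤ N →
      segment ℝ b y ⊆ segment ℝ b a ∪ segment ℝ b c →
      ∀ τ : ℝ, 0 ≤ τ → τ ≤ 1 →
      (b + e) + τ • ((b + (1 + μ) • (y - b) + e) - (b + e)) ∈ WW Q H := by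
    intro y e he hy hsub τ hτ0 hτ1
    apply hPW
    apply hδP
    rw [mem_thickening_iff]
    refine ⟨b + τ • (y - b), hsub ?_, ?_⟩
    · rw [segment_eq_image']; exact ⟨τ, ⟨hτ0, hτ1⟩, rfl⟩
    · rw [dist_eq_norm]
      have : b + e + τ • (b + (1 + μ) • (y - b) + e - (b + e)) - (b + τ • (y - b))
          = e + (τ * μ) • (y - b) := by
        ext i; simp; ring
      rw [this]
      have h3 : ‖(τ * μ) • (y - b)‖ ≤ δ / 2 := by
        rw [norm_smul, Real.norm_of_nonneg (by positivity), ← hμN]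
        have : τ * μ ≤ μ := by nlinarith
        exact mul_le_mul this hy (norm_nonneg _) hμpos.le
      linarith [norm_add_le e ((τ * μ) • (y - b))]
  rintro x hx
  rw [mem_interior_iff_mem_nhds, Metric.mem_nhds_iff]
  refine ⟨δ / 2, by positivity, ?_⟩
  intro x' hx'
  obtain ⟨s, t, hs, ht, hst, rfl⟩ := hx
  set e := x' - (s • a + t • c) with he
  have hen : ‖e‖ < δ / 2 := by rwa [mem_ball, dist_eq_norm] at hx'
  have hk := tri Q hQ hQc H hH (b + (1 + μ) • (a - b) + e) (b + e) (b + (1 + μ) • (c - b) + e)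
    (aux a e hen (by rw [hN]; linarith [norm_nonneg (c - b)]) subset_union_left)
    (aux c e hen (by rw [hN]; linarith [norm_nonneg (a - b)]) subset_union_right)
    (s / (1 + μ)) (t / (1 + μ)) (by positivity) (by positivity)
    (by rw [← add_div, hst, div_lt_one (by positivity)]; linarith)
  convert hk using 1
  ext i
  have h1μ : (1 + μ) ≠ 0 := by positivity
  have ht' : t = 1 - s := by linarith
  simp [he, ht']
  field_simp
  ring

lemma zfree {n : ℕ} (U : Set (Fin n → ℝ)) (hUopen : IsOpen U) (hUconn : IsConnected U)
    (H : (Fin n → ℂ) → ℂ)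
    (hH : DifferentiableOn ℂ H {z : Fin n → ℂ | (fun i => (z i).re) ∈ convexHull ℝ U})
    (hne : ∀ z : Fin n → ℂ, (fun i => (z i).re) ∈ U → H z ≠ 0) :
    ∀ z : Fin n → ℂ, (fun i => (z i).re) ∈ convexHull ℝ U → H z ≠ 0 := by
  have hQ : IsOpen (convexHull ℝ U) := hUopen.convexHull
  have hQc : Convex ℝ (convexHull ℝ U) := convex_convexHull ℝ U
  obtain ⟨x0, hx0⟩ := hUconn.nonempty
  have hUW : U ⊆ WW (convexHull ℝ U) H := fun x hx =>
    ⟨subset_convexHull ℝ U hx, fun z hz => hne z (by rw [hz]; exact hx)⟩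
  have hUi : U ⊆ interior (WW (convexHull ℝ U) H) := interior_maximal hUW hUopen
  set P := connectedComponentIn (interior (WW (convexHull ℝ U) H)) x0 with hPdef
  have hPo : IsOpen P := isOpen_interior.connectedComponentIn
  have hPc : IsPreconnected P := isPreconnected_connectedComponentIn
  have hPi : P ⊆ interior (WW (convexHull ℝ U) H) := connectedComponentIn_subset _ _
  have hPW : P ⊆ WW (convexHull ℝ U) H := hPi.trans interior_subset
  have hUP : U ⊆ P := hUconn.isPreconnected.subset_connectedComponentIn hx0 hUi
  have step : ∀ a b c, segment ℝ b a ⊆ P → segment ℝ b c ⊆ P → segment ℝ a c ⊆ P := by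
    intro a b c h1 h2
    have h3 := hyp _ hQ hQc H hH P hPo hPW a b c h1 h2
    have ha : a ∈ P := h1 (right_mem_segment ℝ b a)
    have := (convex_segment (𝕜 := ℝ) a c).isPreconnected.subset_connectedComponentIn
      (left_mem_segment ℝ a c) h3
    rwa [← connectedComponentIn_eq ha] at this
  have hPconv : Convex ℝ P := by
    rw [convex_iff_segment_subset]
    intro a ha
    have hSo : IsOpen {x | segment ℝ a x ⊆ P} := by
      rw [Metric.isOpen_iff]
      intro x hx
      have hc : IsCompact (segment ℝ a x) := by
        rw [segment_eq_image']
        exact isCompact_Icc.image (by fun_prop)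
      obtain ⟨δ, hδ, hδP⟩ := hc.exists_thickening_subset_open hPo hx
      refine ⟨δ, hδ, ?_⟩
      intro x' hx' y hy
      apply hδP
      rw [mem_thickening_iff]
      obtain ⟨s, t, hs, ht, hst, rfl⟩ := hy
      refine ⟨s • a + t • x, ⟨s, t, hs, ht, hst, rfl⟩, ?_⟩
      rw [mem_ball, dist_eq_norm] at hx'
      rw [dist_eq_norm]
      have : s • a + t • x' - (s • a + t • x) = t • (x' - x) := by
        rw [smul_sub]; abel
      rw [this, norm_smul, Real.norm_of_nonneg ht]
      nlinarith [norm_nonneg (x' - x)]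
    have hsub : P ⊆ {x | segment ℝ a x ⊆ P} := by
      refine hPc.subset_of_closure_inter_subset hSo ⟨a, ha, ?_⟩ ?_
      · simpa using ha
      · rintro x ⟨hxc, hxP⟩
        obtain ⟨r, hr, hrP⟩ := Metric.isOpen_iff.1 hPo x hxP
        obtain ⟨y, hy, hxy⟩ := Metric.mem_closure_iff.1 hxc r hr
        refine step a y x ?_ ?_
        · rw [segment_symm]; exact hy
        · refine ((convex_ball x r).segment_subset ?_ (mem_ball_self hr)).trans hrP
          rw [mem_ball, dist_comm]; exact hxy
    intro c hc
    exact hsub hc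
  intro z hz
  exact (hPW (convexHull_min hUP hPconv hz)).2 z rfl

/-- extension of the inequality `|g| ≤ |h|` from a tube domain to the tube over
the convex hull of its base, for `h` nonvanishing on the original tube. -/
theorem statement7
    (n : ℕ) (hn : 1 ≤ n)
    (U : Set (Fin n → ℝ)) (hUopen : IsOpen U) (hUconn : IsConnected U)
    (g h : (Fin n → ℂ) → ℂ)
    (hg : DifferentiableOn ℂ g {z : Fin n → ℂ | (fun i => (z i).re) ∈ convexHull ℝ U})
    (hh : DifferentiableOn ℂ h {z : Fin n → ℂ | (fun i => (z i).re) ∈ convexHull ℝ U})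
    (hle : ∀ z : Fin n → ℂ, (fun i => (z i).re) ∈ U → ‖g z‖ ≤ ‖h z‖)
    (hne : ∀ z : Fin n → ℂ, (fun i => (z i).re) ∈ U → h z ≠ 0) :
    ∀ z : Fin n → ℂ, (fun i => (z i).re) ∈ convexHull ℝ U → ‖g z‖ ≤ ‖h z‖ := by
  intro z hz
  by_contra hlt
  push Not at hlt
  have hhz : h z ≠ 0 := zfree U hUopen hUconn h hh hne z hz
  have hpos : 0 < ‖h z‖ := norm_pos_iff.2 hhz
  have hc : 1 < ‖g z / h z‖ := by rw [norm_div, one_lt_div hpos]; exact hlt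
  refine zfree U hUopen hUconn (fun w => (g z / h z) * h w - g w) ((hh.const_mul _).sub hg) ?_ z hz ?_
  · intro w hw h0
    have h1 : g z / h z * h w = g w := sub_eq_zero.1 h0
    have h2 := hle w hw
    rw [← h1, norm_mul] at h2
    have : 0 < ‖h w‖ := norm_pos_iff.2 (hne w hw)
    nlinarith
  · field_simp
    simp
end

section
/- Let U₁, U₂ ⊆ ℝ² be bounded open connected sets with U₁ ∩ U₂ ≠ ∅, let T₁, T₂ ⊆ ℂ² be the tube domains over U₁, U₂, and let T be the tube domain over the convex hull of U₁ ∪ U₂. Let g be holomorphic on T and suppose that for every ε > 0 there is C > 0 such that |g(s,w)| ≤ C·exp(ε·(|Im s| + |Im w|)) for all (s,w) ∈ T₁ ∪ T₂. Then for every ε > 0 there is C′ > 0 such that |g(s,w)| ≤ C′·exp(ε·(|Im s| + |Im w|)) for all (s,w) ∈ T. -/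
open Complex

namespace TubeAux
open MeasureTheory Metric Set Filter Topology
open scoped FourierTransform RealInnerProductSpace

abbrev V := EuclideanSpace ℝ (Fin 2)

lemma hol {α : Type*} [MeasurableSpace α] {μ : Measure α} {f : ℂ → α → ℂ} {z₀ : ℂ} {r : ℝ}
    (hr : 0 < r) {b : α → ℝ}
    (hm : ∀ z ∈ ball z₀ r, AEStronglyMeasurable (f z) μ)
    (hd : ∀ a, DifferentiableOn ℂ (fun z => f z a) (ball z₀ r))
    (hb : ∀ a, ∀ z ∈ ball z₀ r, ‖f z a‖ ≤ b a) (hi : Integrable b μ) :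
    DifferentiableAt ℂ (fun z => ∫ a, f z a ∂μ) z₀ := by
  have hz₀ : z₀ ∈ ball z₀ r := mem_ball_self hr
  have hda : ∀ a, ∀ z ∈ ball z₀ r, HasDerivAt (fun z => f z a) (deriv (fun z => f z a) z) z :=
    fun a z hz => ((hd a).differentiableAt (isOpen_ball.mem_nhds hz)).hasDerivAt
  have key := hasDerivAt_integral_of_dominated_loc_of_deriv_le (μ := μ) (F := f) (x₀ := z₀)
    (F' := fun z a => deriv (fun z => f z a) z) (bound := fun a => b a / (r/2))
    (s := ball z₀ (r/2)) (ball_mem_nhds _ (by positivity))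
    (Filter.eventually_of_mem (ball_mem_nhds _ hr) hm)
    (hi.mono' (hm _ hz₀) (Eventually.of_forall fun a => hb a _ hz₀)) ?_ ?_ (hi.div_const _) ?_
  · exact key.2.differentiableAt
  · have hu : ∀ n : ℕ, z₀ + ((r/2/(n+1) : ℝ) : ℂ) ∈ ball z₀ r := by
      intro n
      rw [mem_ball, dist_eq_norm, add_sub_cancel_left, norm_real, Real.norm_eq_abs,
        abs_of_pos (by positivity)]
      rw [div_lt_iff₀ (by positivity)]
      nlinarith [(Nat.cast_nonneg n : (0:ℝ) ≤ n)]
    refine aestronglyMeasurable_of_tendsto_ae (u := atTop)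
      (f := fun (n : ℕ) a => (((r/2/(n+1) : ℝ) : ℂ))⁻¹ • (f (z₀ + ((r/2/(n+1) : ℝ) : ℂ)) a - f z₀ a))
      ?_ ?_
    · intro n
      exact ((hm _ (hu n)).sub (hm _ hz₀)).const_smul ((((r/2/(n+1) : ℝ) : ℂ))⁻¹)
    · refine Eventually.of_forall fun a => ?_
      have := (hda a z₀ hz₀).tendsto_slope_zero
      refine this.comp ?_
      rw [tendsto_nhdsWithin_iff]
      constructor
      · rw [show (0:ℂ) = ((0:ℝ):ℂ) by simp]
        refine (continuous_ofReal.tendsto 0).comp ?_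
        have := (tendsto_one_div_add_atTop_nhds_zero_nat (𝕜 := ℝ)).const_mul (r/2)
        simpa [div_eq_mul_inv] using this
      · refine Eventually.of_forall fun n => ?_
        have : (0:ℝ) < r/2/(n+1) := by positivity
        simpa only [mem_compl_iff, mem_singleton_iff, ofReal_eq_zero] using this.ne'
  · refine Eventually.of_forall fun a z hz => ?_
    have hsub : closedBall z (r/2) ⊆ ball z₀ r := by
      intro w hw
      rw [mem_closedBall] at hw; rw [mem_ball] at hz ⊢
      linarith [dist_triangle w z z₀]
    refine norm_deriv_le_of_forall_mem_sphere_norm_le (by positivity) ?_ ?_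
    · exact DifferentiableOn.diffContOnCl ((hd a).mono (closure_ball_subset_closedBall.trans hsub))
    · intro w hw
      exact hb a w (hsub (sphere_subset_closedBall hw))
  · refine Eventually.of_forall fun a z hz => hda a z (ball_subset_ball (by linarith) hz)

lemma expint {c : ℝ} (hc : 0 < c) : Integrable (fun ξ : V => Real.exp (-c * ‖ξ‖)) := by
  have h := (integrable_one_add_norm (E := V) (μ := volume) (r := 3) (by simp; norm_num))
  refine (h.const_mul (Real.exp c * 6 / c^3)).mono' ?_ ?_
  · exact (by fun_prop : Continuous fun ξ : V => Real.exp (-c * ‖ξ‖)).aestronglyMeasurable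
  · refine Eventually.of_forall fun ξ => ?_
    have ht : 0 ≤ ‖ξ‖ := norm_nonneg ξ
    set t := ‖ξ‖
    have h1 := Real.pow_div_factorial_le_exp (c * (1+t)) (by positivity) 3
    rw [Real.norm_eq_abs, abs_of_pos (Real.exp_pos _), Real.rpow_neg (by positivity)]
    have h3 : (1 + t) ^ (3:ℝ) = (1+t)^3 := by norm_cast
    rw [h3, show -c * t = c - c*(1+t) by ring, Real.exp_sub]
    rw [show Real.exp c * 6 / c ^ 3 * ((1 + t) ^ 3)⁻¹ = Real.exp c / ((c*(1+t))^3/6) by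
      field_simp]
    have : (Nat.factorial 3 : ℝ) = 6 := by norm_num [Nat.factorial]
    rw [this] at h1
    gcongr

/-- real pairing -/
def rd (x : ℝ × ℝ) (ξ : V) : ℝ := x.1 * ξ 0 + x.2 * ξ 1

/-- complex pairing -/
def cd (z : ℂ × ℂ) (ξ : V) : ℂ := z.1 * ξ 0 + z.2 * ξ 1

/-- the point x + i y -/
def pt (x : ℝ × ℝ) (y : V) : ℂ × ℂ := (x.1 + y 0 * I, x.2 + y 1 * I)

def rp (z : ℂ × ℂ) : ℝ × ℝ := (z.1.re, z.2.re)

/-- imaginary part -/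
def ip (z : ℂ × ℂ) : V := !₂[z.1.im, z.2.im]

@[simp] lemma rp_pt (x y) : rp (pt x y) = x := by simp [rp, pt]
@[simp] lemma ip_pt (x y) : ip (pt x y) = y := by
  ext i; fin_cases i <;> simp [ip, pt]
@[simp] lemma pt_rp_ip (z) : pt (rp z) (ip z) = z := by
  ext <;> simp [ip, pt, rp]

lemma rp_cont : Continuous rp := by unfold rp; fun_prop
lemma ip_cont : Continuous ip := by
  unfold ip; fun_prop
lemma pt_cont (x) : Continuous (pt x) := by unfold pt; fun_prop
lemma cd_cont (z) : Continuous (cd z) := by unfold cd; fun_prop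
lemma cd_pt (x y ξ) : cd (pt x y) ξ = rd x ξ + ⟪y, ξ⟫ * I := by
  simp [cd, pt, rd, PiLp.inner_apply, Fin.sum_univ_two]; ring
lemma re_cd (z ξ) : (cd z ξ).re = rd (rp z) ξ := by
  simp [cd, rd, rp]

lemma coord_le (ξ : V) (i : Fin 2) : |ξ i| ≤ ‖ξ‖ := by
  simpa using PiLp.norm_apply_le ξ i

lemma rd_self (ξ : V) : ξ 0 * ξ 0 + ξ 1 * ξ 1 = ‖ξ‖^2 := by
  rw [EuclideanSpace.norm_sq_eq]; simp [Fin.sum_univ_two]; ring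

lemma supp {D : Set (ℝ × ℝ)} (hD : IsOpen D) {x₀ : ℝ × ℝ} (hx₀ : x₀ ∈ convexHull ℝ D) :
    ∃ r > 0, ∀ x ∈ ball x₀ r, ∀ ξ : V, ∃ u ∈ D, rd x ξ + r * ‖ξ‖ ≤ rd u ξ := by
  obtain ⟨R, hR, hsub⟩ := Metric.isOpen_iff.1 hD.convexHull x₀ hx₀
  refine ⟨R/2, by positivity, fun x hx ξ => ?_⟩
  by_contra! hcon
  have hp : x + (R/2/‖ξ‖ * ξ 0, R/2/‖ξ‖ * ξ 1) ∈ convexHull ℝ D := by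
    apply hsub
    have hle : ∀ i, |R/2/‖ξ‖ * ξ i| ≤ R/2 := by
      intro i
      rw [abs_mul, abs_of_nonneg (by positivity)]
      rcases eq_or_ne ‖ξ‖ 0 with h | h
      · rw [h]; simp; positivity
      · rw [div_mul_eq_mul_div, div_le_iff₀ (by positivity)]
        have := coord_le ξ i
        gcongr
    rw [mem_ball] at hx ⊢
    have h2 : dist (x + (R/2/‖ξ‖ * ξ 0, R/2/‖ξ‖ * ξ 1)) x ≤ R/2 := by
      rw [dist_eq_norm, add_sub_cancel_left, Prod.norm_def]
      exact max_le (hle 0) (hle 1)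
    linarith [dist_triangle (x + (R/2/‖ξ‖ * ξ 0, R/2/‖ξ‖ * ξ 1)) x x₀]
  have hconv : Convex ℝ {u : ℝ × ℝ | rd u ξ < rd x ξ + R/2 * ‖ξ‖} := by
    apply convex_halfSpace_lt
    constructor
    · intro a b; simp [rd]; ring
    · intro a b; simp [rd]; ring
  have hin : rd (x + (R/2/‖ξ‖ * ξ 0, R/2/‖ξ‖ * ξ 1)) ξ < rd x ξ + R/2 * ‖ξ‖ :=
    convexHull_min (t := {u : ℝ × ℝ | rd u ξ < rd x ξ + R/2 * ‖ξ‖}) (fun u hu => hcon u hu) hconv hp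
  have : rd (x + (R/2/‖ξ‖ * ξ 0, R/2/‖ξ‖ * ξ 1)) ξ = rd x ξ + R/2 * ‖ξ‖ := by
    have h1 := rd_self ξ
    have : rd (x + (R/2/‖ξ‖ * ξ 0, R/2/‖ξ‖ * ξ 1)) ξ
      = rd x ξ + R/2/‖ξ‖ * (ξ 0 * ξ 0 + ξ 1 * ξ 1) := by simp [rd]; ring
    rw [this, h1]
    rcases eq_or_ne ‖ξ‖ 0 with h | h
    · rw [h]; simp
    · field_simp
  linarith

lemma line_diff {G : ℂ × ℂ → ℂ} {D : Set (ℝ × ℝ)} (hD : IsOpen D)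
    (hG : DifferentiableOn ℂ G (rp ⁻¹' D)) (a b : ℂ × ℂ) (z : ℂ) (h : rp (a + z • b) ∈ D) :
    DifferentiableAt ℂ (fun z : ℂ => G (a + z • b)) z := by
  have h1 := hG.differentiableAt ((hD.preimage rp_cont).mem_nhds h)
  exact DifferentiableAt.comp z h1 (by fun_prop)

lemma slice_cont {G : ℂ × ℂ → ℂ} {D : Set (ℝ × ℝ)}
    (hG : DifferentiableOn ℂ G (rp ⁻¹' D)) {x} (hx : x ∈ D) :
    Continuous (fun y => G (pt x y)) :=
  hG.continuousOn.comp_continuous (pt_cont x) (by simp [hx])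

lemma slice_int {G : ℂ × ℂ → ℂ} {D : Set (ℝ × ℝ)}
    (hG : DifferentiableOn ℂ G (rp ⁻¹' D)) {B : ℝ}
    (hB : ∀ x ∈ D, ∀ y, ‖G (pt x y)‖ ≤ B * Real.exp (-‖y‖)) {x} (hx : x ∈ D) :
    Integrable (fun y => G (pt x y)) := by
  have h := (expint one_pos).const_mul B
  simp only [neg_mul, one_mul] at h
  exact h.mono' (slice_cont hG hx).aestronglyMeasurable (Eventually.of_forall (hB x hx))

lemma const_int {D : Set (ℝ × ℝ)} (hD : IsOpen D) (hDc : IsPreconnected D) {G : ℂ × ℂ → ℂ}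
    (hG : DifferentiableOn ℂ G (rp ⁻¹' D)) {B : ℝ}
    (hB : ∀ x ∈ D, ∀ y, ‖G (pt x y)‖ ≤ B * Real.exp (-‖y‖)) {x x' : ℝ × ℝ}
    (hx : x ∈ D) (hx' : x' ∈ D) : ∫ y, G (pt x y) = ∫ y, G (pt x' y) := by
  refine hDc.induction₂ (fun x x' => ∫ y, G (pt x y) = ∫ y, G (pt x' y)) ?_ ?_ ?_ hx hx'
  · intro x₀ hx₀
    apply Filter.Eventually.filter_mono nhdsWithin_le_nhds
    obtain ⟨r, hr, hsub⟩ := Metric.isOpen_iff.1 hD x₀ hx₀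
    refine Filter.eventually_of_mem (ball_mem_nhds x₀ hr) fun x hx => ?_
    set v : ℝ × ℝ := x - x₀
    set S : Set ℂ := {z | x₀ + z.re • v ∈ ball x₀ r}
    have hScont : Continuous fun z : ℂ => x₀ + z.re • v := by fun_prop
    have hSo : IsOpen S := isOpen_ball.preimage hScont
    have hSc : Convex ℝ S := by
      intro z hz w hw a b ha hb hab
      have := convex_ball x₀ r hz hw ha hb hab
      change x₀ + (a • z + b • w).re • v ∈ ball x₀ r
      convert this using 1
      simp only [add_re, real_smul, mul_re, ofReal_re, ofReal_im, zero_mul, sub_zero]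
      rw [show b = 1 - a by linarith]
      module
    set f : ℂ → ℂ := fun z => ∫ y, G (pt (x₀ + z.re • v) y)
    let b : ℂ × ℂ := pt v 0
    have hline : ∀ (z : ℂ) (y : V), pt x₀ y + z • b = pt (x₀ + z.re • v) (y + z.im • !₂[v.1, v.2]) := by
      intro z y
      simp only [b, pt]
      ext
      · simp; linear_combination (-(v.1:ℂ)) * (re_add_im z)
      · simp; linear_combination (-(v.2:ℂ)) * (re_add_im z)
    have hf : ∀ z, f z = ∫ y, G (pt x₀ y + z • b) := by
      intro z
      simp only [hline, f]
      exact (integral_add_right_eq_self (fun y => G (pt (x₀ + z.re • v) y)) _).symm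
    have hfd : ∀ z ∈ S, DifferentiableAt ℂ f z := by
      intro z hz
      obtain ⟨ρ, hρ, hρS⟩ := Metric.isOpen_iff.1 hSo z hz
      rw [show f = fun z => ∫ y, G (pt x₀ y + z • b) from funext hf]
      set K : ℝ := (|z.im| + ρ) * ‖(!₂[v.1, v.2] : V)‖
      refine hol hρ (b := fun y => (B * Real.exp K) * Real.exp (-1 * ‖y‖)) ?_ ?_ ?_
        ((expint one_pos).const_mul _)
      · intro w hw
        simp only [hline]
        exact ((slice_cont hG (hsub (hρS hw))).comp (by fun_prop)).aestronglyMeasurable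
      · intro y w hw
        refine (line_diff hD hG _ _ _ ?_).differentiableWithinAt
        rw [hline, rp_pt]
        exact hsub (hρS hw)
      · intro y w hw
        rw [hline]
        refine (hB _ (hsub (hρS hw)) _).trans ?_
        have hB0 : 0 ≤ B := by
          have := (norm_nonneg _).trans (hB x₀ hx₀ 0)
          simpa using this
        rw [mul_assoc, ← Real.exp_add]
        gcongr
        have h1 : ‖y‖ ≤ ‖y + w.im • (!₂[v.1, v.2] : V)‖ + ‖w.im • (!₂[v.1, v.2] : V)‖ := by
          simpa using norm_sub_le (y + w.im • (!₂[v.1, v.2] : V)) (w.im • (!₂[v.1, v.2] : V))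
        have h2 : ‖w.im • (!₂[v.1, v.2] : V)‖ ≤ K := by
          rw [norm_smul]
          have : |w.im| ≤ |z.im| + ρ := by
            have h3 : |(w - z).im| ≤ ‖w - z‖ := abs_im_le_norm _
            rw [mem_ball, dist_eq_norm] at hw
            rw [sub_im] at h3
            have := abs_sub_abs_le_abs_sub w.im z.im
            linarith
          rw [Real.norm_eq_abs]
          exact mul_le_mul_of_nonneg_right this (norm_nonneg _)
        linarith
    have hf0 : ∀ z ∈ S, deriv f z = 0 := by
      intro z hz
      have h1 := (hfd z hz).hasDerivAt
      have h2 : HasDerivAt (fun t : ℝ => z + t * I) I 0 := by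
        simpa using ((hasDerivAt_id (0:ℝ)).ofReal_comp.mul_const I).const_add z
      have h3 : HasDerivAt (fun t : ℝ => f (z + t * I)) (deriv f z * I) 0 :=
        HasDerivAt.comp (0:ℝ) (h₂ := f) (by simpa using h1) h2
      have h4 : (fun t : ℝ => f (z + t * I)) = fun t => f z := by
        funext t; simp [f]
      rw [h4] at h3
      have := h3.unique (hasDerivAt_const _ _)
      simpa using this
    have hc := hSo.is_const_of_deriv_eq_zero hSc.isPreconnected
      (fun z hz => (hfd z hz).differentiableWithinAt) (fun z hz => hf0 z hz)
      (x := 0) (y := 1) (by simp [S, hr]) (by simpa [S, v, dist_eq_norm] using hx)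
    simpa [f, v] using hc
  · intro a b c _ _ _ h1 h2; exact h1.trans h2
  · intro a b _ _ h; exact h.symm

lemma ptwise {D : Set (ℝ × ℝ)} (hD : IsOpen D) (hDc : IsPreconnected D)
    (hDb : Bornology.IsBounded D) {x₀ : ℝ × ℝ} (hx₀ : x₀ ∈ convexHull ℝ D) :
    ∃ Cst : ℝ, ∀ (F : ℂ × ℂ → ℂ) (A : ℝ), DifferentiableOn ℂ F (rp ⁻¹' (convexHull ℝ D)) →
      (∀ x ∈ D, ∀ y, ‖F (pt x y)‖ ≤ A * Real.exp (-‖y‖)) →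
      ∀ y, ‖F (pt x₀ y)‖ ≤ A * Cst := by
  set I₁ : ℝ := ∫ y : V, Real.exp (-1 * ‖y‖) with hI₁
  have hI₁0 : 0 ≤ I₁ := integral_nonneg fun _ => (Real.exp_pos _).le
  obtain ⟨r₀, hr₀, hs₀⟩ := supp hD hx₀
  refine ⟨I₁ * ∫ ξ : V, Real.exp (-(2 * Real.pi * r₀) * ‖ξ‖), fun F A hF hA => ?_⟩
  have hsubD : D ⊆ convexHull ℝ D := subset_convexHull ℝ D
  have hFD : DifferentiableOn ℂ F (rp ⁻¹' D) := hF.mono (preimage_mono hsubD)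
  obtain ⟨x₁, hx₁⟩ : D.Nonempty := convexHull_nonempty_iff.1 ⟨x₀, hx₀⟩
  have hA0 : 0 ≤ A := by
    have := (norm_nonneg _).trans (hA x₁ hx₁ 0)
    simpa using this
  let φ : V → ℂ := fun ξ => cexp (-(2 * Real.pi * rd x₁ ξ : ℝ)) * 𝓕 (fun y => F (pt x₁ y)) ξ
  have hφc : Continuous φ := by
    have : Continuous (𝓕 (fun y => F (pt x₁ y))) :=
      (VectorFourier.fourierIntegral_continuous Real.continuous_fourierChar
        (by exact continuous_inner) (slice_int hFD hA hx₁))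
    have h2 : Continuous (rd x₁) := by unfold rd; fun_prop
    fun_prop
  have h1 : ∀ x ∈ D, ∀ ξ : V, cexp (-(2 * Real.pi * rd x ξ : ℝ)) * 𝓕 (fun y => F (pt x y)) ξ
      = ∫ y, F (pt x y) * cexp (-(2 * Real.pi) * cd (pt x y) ξ) := by
    intro x hx ξ
    rw [Real.fourier_eq', ← integral_const_mul]
    congr 1; funext y
    rw [smul_eq_mul, ← mul_assoc, ← Complex.exp_add, mul_comm (F _), cd_pt]
    congr 2
    push_cast; ring
  have h2 : ∀ x ∈ D, ∀ ξ : V,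
      cexp (-(2 * Real.pi * rd x ξ : ℝ)) * 𝓕 (fun y => F (pt x y)) ξ = φ ξ := by
    intro x hx ξ
    simp only [φ]
    rw [h1 x hx, h1 x₁ hx₁]
    obtain ⟨R, hR⟩ := hDb.exists_norm_le
    refine const_int hD hDc (G := fun z => F z * cexp (-(2 * Real.pi) * cd z ξ))
      (B := A * Real.exp (2 * Real.pi * (R * ‖ξ‖ + R * ‖ξ‖))) ?_ ?_ hx hx₁
    · refine hFD.mul ?_
      unfold cd
      fun_prop
    · intro u hu y
      rw [norm_mul, Complex.norm_exp]
      have e1 : (-(2 * Real.pi) * cd (pt u y) ξ : ℂ).re = -(2 * Real.pi) * rd u ξ := by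
        rw [show (-(2 * Real.pi) * cd (pt u y) ξ : ℂ)
          = ((-(2 * Real.pi) : ℝ) : ℂ) * cd (pt u y) ξ by push_cast; ring, re_ofReal_mul, re_cd,
          rp_pt]
      rw [e1]
      have hu1 : |u.1| ≤ R := (norm_fst_le u).trans (hR u hu)
      have hu2 : |u.2| ≤ R := (norm_snd_le u).trans (hR u hu)
      have e2 : -(rd u ξ) ≤ R * ‖ξ‖ + R * ‖ξ‖ := by
        refine (neg_le_abs _).trans ?_
        refine (abs_add_le _ _).trans ?_
        rw [abs_mul, abs_mul]
        have := coord_le ξ 0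
        have := coord_le ξ 1
        have hR0 : 0 ≤ R := (abs_nonneg _).trans hu1
        gcongr
      calc ‖F (pt u y)‖ * Real.exp (-(2 * Real.pi) * rd u ξ)
          ≤ (A * Real.exp (-‖y‖)) * Real.exp (2 * Real.pi * (R * ‖ξ‖ + R * ‖ξ‖)) := by
            refine mul_le_mul (hA u hu y) (Real.exp_le_exp.2 ?_) (Real.exp_pos _).le (by positivity)
            have := mul_le_mul_of_nonneg_left e2 Real.two_pi_pos.le
            linarith
        _ = _ := by ring
  have h3 : ∀ x ∈ D, ∀ ξ : V, ‖φ ξ‖ ≤ A * I₁ * Real.exp (-(2 * Real.pi * rd x ξ)) := by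
    intro x hx ξ
    rw [← h2 x hx, norm_mul, mul_comm, ← ofReal_neg, Complex.norm_exp, ofReal_re]
    gcongr
    rw [Real.fourier_eq]
    refine (norm_integral_le_integral_norm _).trans ?_
    rw [hI₁, ← integral_const_mul]
    refine integral_mono_of_nonneg (Eventually.of_forall fun _ => norm_nonneg _)
      ((expint one_pos).const_mul A) (Eventually.of_forall fun y => ?_)
    simpa using hA x hx y
  have h4 : ∀ r, ∀ z : ℂ × ℂ, ∀ ξ : V, (∃ u ∈ D, rd (rp z) ξ + r * ‖ξ‖ ≤ rd u ξ) →
      ‖φ ξ * cexp (2 * Real.pi * cd z ξ)‖ ≤ A * I₁ * Real.exp (-(2 * Real.pi * r) * ‖ξ‖) := by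
    rintro r z ξ ⟨u, hu, hle⟩
    have e1 : (2 * Real.pi * cd z ξ : ℂ).re = (2 * Real.pi) * rd (rp z) ξ := by
      rw [show (2 * Real.pi * cd z ξ : ℂ)
          = ((2 * Real.pi : ℝ) : ℂ) * cd z ξ by push_cast; ring, re_ofReal_mul, re_cd]
    rw [norm_mul, Complex.norm_exp, e1]
    calc ‖φ ξ‖ * Real.exp (2 * Real.pi * rd (rp z) ξ)
        ≤ (A * I₁ * Real.exp (-(2 * Real.pi * rd u ξ))) * Real.exp (2 * Real.pi * rd (rp z) ξ) := by
          gcongr; exact h3 u hu ξ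
      _ = A * I₁ * Real.exp (-(2 * Real.pi * rd u ξ) + 2 * Real.pi * rd (rp z) ξ) := by
          rw [mul_assoc, ← Real.exp_add]
      _ ≤ _ := by
          gcongr
          have := mul_le_mul_of_nonneg_left hle Real.two_pi_pos.le
          linarith
  have hcE : ∀ z : ℂ × ℂ, Continuous fun ξ => φ ξ * cexp (2 * Real.pi * cd z ξ) := by
    intro z
    have := cd_cont z
    fun_prop
  have hint : ∀ z : ℂ × ℂ, rp z ∈ convexHull ℝ D →
      Integrable fun ξ => φ ξ * cexp (2 * Real.pi * cd z ξ) := by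
    intro z hz
    obtain ⟨r, hr, hs⟩ := supp hD hz
    exact ((expint (c := 2 * Real.pi * r) (by positivity)).const_mul (A * I₁)).mono'
      (hcE z).aestronglyMeasurable
      (Eventually.of_forall fun ξ => h4 r z ξ (hs _ (mem_ball_self hr) ξ))
  let H : ℂ × ℂ → ℂ := fun z => ∫ ξ, φ ξ * cexp (2 * Real.pi * cd z ξ)
  have h5 : ∀ z, rp z ∈ D → H z = F z := by
    intro z hz
    obtain ⟨x, y, rfl⟩ : ∃ x y, z = pt x y := ⟨_, _, (pt_rp_ip z).symm⟩
    rw [rp_pt] at hz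
    have e : ∀ (y' ξ : V), φ ξ * cexp (2 * Real.pi * cd (pt x y') ξ)
        = cexp ((2 * Real.pi * ⟪ξ, y'⟫ : ℝ) * I) • 𝓕 (fun y => F (pt x y)) ξ := by
      intro y' ξ
      rw [← h2 x hz, mul_right_comm, ← Complex.exp_add, smul_eq_mul, cd_pt, real_inner_comm]
      congr 2
      push_cast; ring
    have hi : Integrable (𝓕 (fun y => F (pt x y))) := by
      have := hint (pt x 0) (hsubD (by simpa using hz))
      simpa only [e, inner_zero_right, mul_zero, ofReal_zero, zero_mul, Complex.exp_zero,
        one_smul] using this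
    have := congrFun (Continuous.fourierInv_fourier_eq (slice_cont hFD hz)
      (slice_int hFD hA hz) hi) y
    rw [Real.fourierInv_eq'] at this
    simp only [H, e]
    exact this
  have h6 : ∀ z, rp z ∈ convexHull ℝ D → H z = F z := by
    intro z hz
    let a := pt x₁ 0
    let b := z - a
    let S : Set ℂ := {w | rp (a + w • b) ∈ convexHull ℝ D}
    have hcont : Continuous fun w : ℂ => rp (a + w • b) := rp_cont.comp (by fun_prop)
    have hSo : IsOpen S := hD.convexHull.preimage hcont
    have hSc : Convex ℝ S := by
      intro z hz w hw s t hs ht hst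
      have := convex_convexHull ℝ D hz hw hs ht hst
      change rp (a + (s • z + t • w) • b) ∈ convexHull ℝ D
      convert this using 1
      obtain rfl : t = 1 - s := by linarith
      simp only [rp]
      ext <;> simp <;> ring
    have hFl : DifferentiableOn ℂ (fun w : ℂ => F (a + w • b)) S := fun w hw =>
      (line_diff hD.convexHull hF a b w hw).differentiableWithinAt
    have hHl : DifferentiableOn ℂ (fun w : ℂ => H (a + w • b)) S := by
      intro w hw
      apply DifferentiableAt.differentiableWithinAt
      obtain ⟨r, hr, hs⟩ := supp hD hw
      obtain ⟨ρ, hρ, hρS⟩ := Metric.isOpen_iff.1 (isOpen_ball.preimage hcont) w (mem_ball_self hr)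
      refine hol hρ (f := fun w ξ => φ ξ * cexp (2 * Real.pi * cd (a + w • b) ξ)) ?_ ?_
        (fun ξ w' hw' => h4 r _ ξ (hs _ (hρS hw') ξ))
        ((expint (c := 2 * Real.pi * r) (by positivity)).const_mul (A * I₁))
      · intro w' _
        exact (hcE _).aestronglyMeasurable
      · intro ξ
        unfold cd
        simp only [Prod.fst_add, Prod.snd_add, Prod.smul_fst, Prod.smul_snd]
        fun_prop
    have h0S : (0:ℂ) ∈ S := by
      change rp (a + (0:ℂ) • b) ∈ convexHull ℝ D
      rw [zero_smul, add_zero, rp_pt]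
      exact hsubD hx₁
    have heq := AnalyticOnNhd.eqOn_of_preconnected_of_eventuallyEq (hHl.analyticOnNhd hSo)
      (hFl.analyticOnNhd hSo) hSc.isPreconnected h0S
      (by
        refine Filter.eventually_of_mem ((hD.preimage hcont).mem_nhds (x := 0) ?_)
          fun w hw => h5 _ hw
        change rp (a + (0:ℂ) • b) ∈ D
        rw [zero_smul, add_zero, rp_pt]
        exact hx₁)
    have h1S : (1:ℂ) ∈ S := by
      change rp (a + (1:ℂ) • b) ∈ convexHull ℝ D
      simpa [b] using hz
    simpa [b] using heq h1S
  intro y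
  rw [← h6 (pt x₀ y) (by simpa using hx₀), ← mul_assoc, ← integral_const_mul]
  refine norm_integral_le_of_norm_le ((expint (by positivity)).const_mul _)
    (Eventually.of_forall fun ξ => h4 r₀ _ ξ ?_)
  rw [rp_pt]
  exact hs₀ _ (mem_ball_self hr₀) ξ

lemma re_sq_aux (a b t : ℝ) : (((a : ℂ) + b * I - t * I) ^ 2).re = a^2 - (b - t)^2 := by
  simp [pow_two]

lemma maxp {D : Set (ℝ × ℝ)} (hD : IsOpen D) (hDc : IsPreconnected D)
    (hDb : Bornology.IsBounded D) {H : ℂ × ℂ → ℂ}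
    (hH : DifferentiableOn ℂ H (rp ⁻¹' (convexHull ℝ D))) {M : ℝ} (hM0 : 0 ≤ M)
    (hM : ∀ x ∈ D, ∀ y, ‖H (pt x y)‖ ≤ M) {x : ℝ × ℝ} (hx : x ∈ convexHull ℝ D) (y : V) :
    ‖H (pt x y)‖ ≤ M := by
  obtain ⟨Cst, hC⟩ := ptwise hD hDc hDb hx
  obtain ⟨R, hR⟩ := hDb.exists_norm_le
  by_contra! hlt
  obtain ⟨N, hN1, hN2⟩ := exists_between hlt
  have hN : 0 < N := hM0.trans_lt hN1
  set h := ‖H (pt x y)‖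
  let K : ℂ × ℂ → ℂ := fun z => cexp (z.1 ^ 2 + z.2 ^ 2)
  have hKn : ∀ x y, ‖K (pt x y)‖ = Real.exp (x.1^2 + x.2^2 - ‖y‖^2) := by
    intro x y
    simp only [K, pt]
    rw [Complex.norm_exp, add_re]
    have h1 := re_sq_aux x.1 (y 0) 0
    have h2 := re_sq_aux x.2 (y 1) 0
    simp only [ofReal_zero, zero_mul, sub_zero] at h1 h2
    rw [h1, h2, ← rd_self y]
    congr 1; ring
  have hk : 0 < ‖K (pt x y)‖ := by rw [hKn]; exact Real.exp_pos _
  set k := ‖K (pt x y)‖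
  have key : ∀ n : ℕ, (h / N)^n ≤ Real.exp (2 * R^2 + 1) * Cst / k := by
    intro n
    have := hC (fun z => H z ^ n * K z) (N^n * Real.exp (2 * R^2 + 1)) ?_ ?_ y
    · rw [norm_mul, norm_pow] at this
      rw [div_pow, div_le_div_iff₀ (by positivity) hk]
      change h^n * k ≤ _ at this
      linarith
    · refine (hH.pow n).mul ?_
      simp only [K]
      fun_prop
    · intro u hu y
      rw [norm_mul, norm_pow, hKn, mul_assoc, ← Real.exp_add]
      have hu1 : u.1^2 ≤ R^2 := sq_le_sq' (by
        have := (abs_le.1 ((norm_fst_le u).trans (hR u hu))).1; linarith)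
        (abs_le.1 ((norm_fst_le u).trans (hR u hu))).2
      have hu2 : u.2^2 ≤ R^2 := sq_le_sq' (by
        have := (abs_le.1 ((norm_snd_le u).trans (hR u hu))).1; linarith)
        (abs_le.1 ((norm_snd_le u).trans (hR u hu))).2
      refine mul_le_mul (pow_le_pow_left₀ (norm_nonneg _) ((hM u hu y).trans hN1.le) n)
        (Real.exp_le_exp.2 ?_) (Real.exp_pos _).le (by positivity)
      nlinarith [sq_nonneg (‖y‖ - 1), norm_nonneg y]
  obtain ⟨n, hn⟩ := pow_unbounded_of_one_lt (Real.exp (2 * R^2 + 1) * Cst / k)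
    ((one_lt_div hN).2 hN2)
  exact absurd (key n) (not_le.2 hn)

end TubeAux

open TubeAux in
/-- a function of sub-exponential growth on two overlapping bounded tube domains,
holomorphic on the tube over the convex hull of the union of their bases, has sub-exponential
growth on that larger tube. -/
theorem statement8
    (U₁ U₂ : Set (ℝ × ℝ))
    (hU₁o : IsOpen U₁) (hU₁c : IsConnected U₁) (hU₁b : Bornology.IsBounded U₁)
    (hU₂o : IsOpen U₂) (hU₂c : IsConnected U₂) (hU₂b : Bornology.IsBounded U₂)
    (hinter : (U₁ ∩ U₂).Nonempty)
    (g : ℂ × ℂ → ℂ)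
    (hg : DifferentiableOn ℂ g {p : ℂ × ℂ | (p.1.re, p.2.re) ∈ convexHull ℝ (U₁ ∪ U₂)})
    (hbd : ∀ ε : ℝ, 0 < ε → ∃ C : ℝ, 0 < C ∧ ∀ p : ℂ × ℂ,
      (p.1.re, p.2.re) ∈ U₁ ∪ U₂ →
        ‖g p‖ ≤ C * Real.exp (ε * (|p.1.im| + |p.2.im|))) :
    ∀ ε : ℝ, 0 < ε → ∃ C' : ℝ, 0 < C' ∧ ∀ p : ℂ × ℂ,
      (p.1.re, p.2.re) ∈ convexHull ℝ (U₁ ∪ U₂) →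
        ‖g p‖ ≤ C' * Real.exp (ε * (|p.1.im| + |p.2.im|)) := by
  intro ε hε
  obtain ⟨C, hC0, hC⟩ := hbd ε hε
  have hDo : IsOpen (U₁ ∪ U₂) := hU₁o.union hU₂o
  have hDc : IsPreconnected (U₁ ∪ U₂) := (hU₁c.union hinter hU₂c).isPreconnected
  have hDb : Bornology.IsBounded (U₁ ∪ U₂) := hU₁b.union hU₂b
  obtain ⟨R, hR⟩ := hDb.exists_norm_le
  refine ⟨C * Real.exp (2 * R^2 + ε^2), by positivity, fun p hp => ?_⟩
  set t₁ := p.1.im with ht₁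
  set t₂ := p.2.im with ht₂
  let K : ℂ × ℂ → ℂ := fun z => cexp ((z.1 - t₁ * I) ^ 2 + (z.2 - t₂ * I) ^ 2)
  have hKn : ∀ x y, ‖K (pt x y)‖
      = Real.exp (x.1^2 - (y 0 - t₁)^2 + (x.2^2 - (y 1 - t₂)^2)) := by
    intro x y
    simp only [K, pt]
    rw [Complex.norm_exp, add_re, re_sq_aux, re_sq_aux]
  have hdiff : DifferentiableOn ℂ (fun z => g z * K z) (rp ⁻¹' (convexHull ℝ (U₁ ∪ U₂))) := by
    refine DifferentiableOn.mul hg ?_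
    simp only [K]
    fun_prop
  have hmain := maxp hDo hDc hDb hdiff
    (M := C * Real.exp (2 * R^2 + ε^2) * Real.exp (ε * (|t₁| + |t₂|))) (by positivity) ?_
    (x := rp p) hp (ip p)
  · rw [norm_mul, hKn, pt_rp_ip] at hmain
    refine le_trans ?_ hmain
    refine le_mul_of_one_le_right (norm_nonneg _) (Real.one_le_exp ?_)
    simp only [ip, rp]
    simp [← ht₁, ← ht₂]
    positivity
  · intro u hu y
    rw [norm_mul, hKn]
    have h1 := hC (pt u y) (by simpa [pt] using hu)
    have i1 : (pt u y).1.im = y 0 := by simp [pt]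
    have i2 : (pt u y).2.im = y 1 := by simp [pt]
    rw [i1, i2] at h1
    have hu1 : u.1^2 ≤ R^2 := sq_le_sq' (by
        have := (abs_le.1 ((norm_fst_le u).trans (hR u hu))).1; linarith)
        (abs_le.1 ((norm_fst_le u).trans (hR u hu))).2
    have hu2 : u.2^2 ≤ R^2 := sq_le_sq' (by
        have := (abs_le.1 ((norm_snd_le u).trans (hR u hu))).1; linarith)
        (abs_le.1 ((norm_snd_le u).trans (hR u hu))).2
    have haux : ∀ a t : ℝ, ε * |a| - (a - t)^2 ≤ ε * |t| + ε^2/2 := by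
      intro a t
      have h2 : |a| ≤ |t| + |a - t| := by
        have := abs_add_le t (a - t)
        rwa [add_sub_cancel] at this
      have h3 := mul_le_mul_of_nonneg_left h2 hε.le
      rw [← sq_abs (a - t)]
      nlinarith [sq_nonneg (|a - t| - ε/2), sq_nonneg ε]
    have ha := haux (y 0) t₁
    have hb := haux (y 1) t₂
    refine (mul_le_mul_of_nonneg_right h1 (Real.exp_pos _).le).trans ?_
    rw [mul_assoc, mul_assoc, ← Real.exp_add, ← Real.exp_add]
    refine mul_le_mul_of_nonneg_left (Real.exp_le_exp.2 ?_) hC0.le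
    linarith
end

section
/- Let U₁, U₂ ⊆ ℝ² be open connected sets with U₁ ∩ U₂ ≠ ∅, let R₁, R₂ ⊆ ℂ² be the tube domains over U₁, U₂, and let R be the tube domain over the convex hull of U₁ ∪ U₂. Let α₁, β₁, α₂, β₂, C₁, C₂ > 0 and let g be holomorphic on R with |g(s,w)| ≤ C₁·(1+|Im s|)^{α₁}·(1+|Im w|)^{β₁} for (s,w) ∈ R₁ and |g(s,w)| ≤ C₂·(1+|Im s|)^{α₂}·(1+|Im w|)^{β₂} for (s,w) ∈ R₂. Then there is C > 0, depending only on C₁, C₂, α₁, β₁, α₂, β₂ (in particular not on g, U₁, U₂), such that whenever (s,w) ∈ R, (s₁,w₁) ∈ R₁, (s₂,w₂) ∈ R₂, 0 ≤ t ≤ 1 and (s,w) = t·(s₁,w₁) + (1−t)·(s₂,w₂), one has |g(s,w)| ≤ C·(1+|Im s|)^{tα₁+(1−t)α₂}·(1+|Im w|)^{tβ₁+(1−t)β₂}·(1+|Re s₁ − Re s₂|)^{tα₁+(1−t)α₂}·(1+|Re w₁ − Re w₂|)^{tβ₁+(1−t)β₂}. -/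
open Complex

theorem tri_aux (F : ℂ × ℂ → ℂ) (H : Set (ℝ × ℝ)) (hH : Convex ℝ H)
    (hF : ∀ z : ℂ × ℂ, (z.1.re, z.2.re) ∈ H → DifferentiableAt ℂ F z)
    (M : ℝ) (o1 o2 p1 p2 q1 q2 : ℝ) (ho : (o1, o2) ∈ H) (hp : (p1, p2) ∈ H) (hq : (q1, q2) ∈ H)
    (h1 : ∀ x y : ℝ, 0 ≤ x → 0 ≤ y → x + y ≤ 1 → (x = 0 ∨ y = 0) → ∀ z : ℂ × ℂ,
      z.1.re = o1 + x * (p1 - o1) + y * (q1 - o1) → z.2.re = o2 + x * (p2 - o2) + y * (q2 - o2) →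
      ‖F z‖ ≤ M)
    (a b : ℝ) (ha : 0 < a) (hb : 0 < b) (hab : a + b = 1) (z : ℂ × ℂ)
    (hz1 : z.1.re = o1 + a * (p1 - o1) + b * (q1 - o1))
    (hz2 : z.2.re = o2 + a * (p2 - o2) + b * (q2 - o2)) : ‖F z‖ ≤ M := by
  have hT : ∀ x y : ℝ, 0 ≤ x → 0 ≤ y → x + y ≤ 1 → ∀ z : ℂ × ℂ,
      z.1.re = o1 + x * (p1 - o1) + y * (q1 - o1) → z.2.re = o2 + x * (p2 - o2) + y * (q2 - o2) →
      (z.1.re, z.2.re) ∈ H := by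
    intro x y hx hy hxy w hw1 hw2
    have h3 := hH.sum_mem (t := Finset.univ) (w := ![1 - x - y, x, y])
      (z := ![(o1, o2), (p1, p2), (q1, q2)])
      (by intro i _; fin_cases i <;> simp <;> linarith)
      (by simp [Fin.sum_univ_three]; ring) (by intro i _; fin_cases i <;> simp [ho, hp, hq])
    convert h3 using 1
    simp [Fin.sum_univ_three]
    constructor
    · rw [hw1]; ring
    · rw [hw2]; ring
  -- the disc
  let Φ : ℝ → ℂ → ℂ × ℂ := fun ε ζ =>
    (z.1 + (ζ + ε * ζ ^ 2 - 8 * ε * a) * ((p1 - o1 : ℝ) : ℂ)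
        + (-ζ + ε * ζ ^ 2 - 8 * ε * b) * ((q1 - o1 : ℝ) : ℂ),
     z.2 + (ζ + ε * ζ ^ 2 - 8 * ε * a) * ((p2 - o2 : ℝ) : ℂ)
        + (-ζ + ε * ζ ^ 2 - 8 * ε * b) * ((q2 - o2 : ℝ) : ℂ))
  have key : ∀ ε : ℝ, 0 < ε → ε < 1 / 8 → ‖F (Φ ε 0)‖ ≤ M := by
    intro ε hε hε1
    let X : ℂ → ℝ := fun ζ => a * (1 - 8 * ε) + ζ.re + ε * (ζ.re ^ 2 - ζ.im ^ 2)
    let Y : ℂ → ℝ := fun ζ => b * (1 - 8 * ε) - ζ.re + ε * (ζ.re ^ 2 - ζ.im ^ 2)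
    have hX : Continuous X := by fun_prop
    have hY : Continuous Y := by fun_prop
    let Ω : Set ℂ := {ζ | 0 < X ζ ∧ 0 < Y ζ ∧ |ζ.re| < 2}
    have hΩo : IsOpen Ω :=
      (isOpen_lt continuous_const hX).inter ((isOpen_lt continuous_const hY).inter
        (isOpen_lt Complex.continuous_re.abs continuous_const))
    have hcl : closure Ω ⊆ {ζ | 0 ≤ X ζ ∧ 0 ≤ Y ζ ∧ |ζ.re| ≤ 2} := by
      apply closure_minimal
      · rintro ζ ⟨h1, h2, h3⟩
        exact ⟨h1.le, h2.le, h3.le⟩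
      · exact (isClosed_le continuous_const hX).inter ((isClosed_le continuous_const hY).inter
          (isClosed_le Complex.continuous_re.abs continuous_const))
    have hsum : ∀ ζ ∈ closure Ω, 0 ≤ X ζ ∧ 0 ≤ Y ζ ∧ X ζ + Y ζ ≤ 1 ∧ |ζ.re| ≤ 1
        ∧ ε * ζ.im ^ 2 ≤ 1 + ε * 4 := by
      intro ζ hζ
      obtain ⟨h1, h2, h3⟩ := hcl hζ
      have h4 : ζ.re ^ 2 ≤ 4 := by
        rw [← sq_abs]; nlinarith [abs_nonneg ζ.re]
      have e : X ζ + Y ζ = 1 - 8 * ε + 2 * (ε * (ζ.re ^ 2 - ζ.im ^ 2)) := by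
        simp only [X, Y]; linear_combination (1 - 8 * ε) * hab
      have e2 : X ζ - Y ζ = (a - b) * (1 - 8 * ε) + 2 * ζ.re := by
        simp only [X, Y]; ring
      have h5 : X ζ + Y ζ ≤ 1 := by
        rw [e]; nlinarith [mul_nonneg hε.le (sq_nonneg ζ.im), mul_le_mul_of_nonneg_left h4 hε.le]
      refine ⟨h1, h2, h5, ?_, ?_⟩
      · rw [abs_le]; constructor <;> nlinarith
      · nlinarith [mul_nonneg hε.le (sq_nonneg ζ.im), mul_le_mul_of_nonneg_left h4 hε.le]
    have hre1 : ∀ ζ, (Φ ε ζ).1.re = o1 + X ζ * (p1 - o1) + Y ζ * (q1 - o1) := by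
      intro ζ
      simp [Φ, X, Y, hz1, pow_two]; ring
    have hre2 : ∀ ζ, (Φ ε ζ).2.re = o2 + X ζ * (p2 - o2) + Y ζ * (q2 - o2) := by
      intro ζ
      simp [Φ, X, Y, hz2, pow_two]; ring
    have hbd : Bornology.IsBounded Ω := by
      rw [isBounded_iff_forall_norm_le]
      refine ⟨1 + (1 + (1 + ε * 4) / ε), fun ζ hζ => ?_⟩
      obtain ⟨_, _, _, h4, h5⟩ := hsum ζ (subset_closure hζ)
      have h6 : ζ.im ^ 2 ≤ (1 + ε * 4) / ε := by
        rw [le_div_iff₀ hε]; linarith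
      have h7 : |ζ.im| ≤ 1 + ζ.im ^ 2 := by
        rw [← sq_abs]; nlinarith [sq_nonneg (|ζ.im| - 1), abs_nonneg ζ.im]
      linarith [Complex.norm_le_abs_re_add_abs_im ζ]
    have hd : DiffContOnCl ℂ (fun ζ => F (Φ ε ζ)) Ω := by
      apply DifferentiableOn.diffContOnCl
      intro ζ hζ
      obtain ⟨h1, h2, h3, h4, h5⟩ := hsum ζ hζ
      have hd1 := hF _ (hT _ _ h1 h2 h3 _ (hre1 ζ) (hre2 ζ))
      have hd2 : DifferentiableAt ℂ (Φ ε) ζ := by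
        simp only [Φ]; fun_prop
      exact (hd1.comp ζ hd2).differentiableWithinAt
    refine Complex.norm_le_of_forall_mem_frontier_norm_le hbd hd ?_ (z := 0) (subset_closure ?_)
    · intro ζ hζ
      rw [hΩo.frontier_eq] at hζ
      obtain ⟨g1, g2, g3, g4, g5⟩ := hsum ζ hζ.1
      refine h1 _ _ g1 g2 g3 ?_ _ (hre1 ζ) (hre2 ζ)
      by_contra! hne
      exact hζ.2 ⟨lt_of_le_of_ne g1 hne.1.symm, lt_of_le_of_ne g2 hne.2.symm, by linarith⟩
    · simp only [Ω, X, Y, Set.mem_ofPred_eq]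
      simp
      constructor <;> apply mul_pos <;> linarith
  have hc : ContinuousAt (fun ε : ℝ => ‖F (Φ ε 0)‖) 0 := by
    have h0 : Φ 0 0 = z := by simp [Φ]
    have hFz : ContinuousAt F (Φ 0 0) := by
      rw [h0]; exact (hF z (hT a b ha.le hb.le hab.le z hz1 hz2)).continuousAt
    have hΦ : ContinuousAt (fun ε : ℝ => Φ ε 0) 0 := by
      simp only [Φ]; fun_prop
    exact (ContinuousAt.comp (f := fun ε : ℝ => Φ ε 0) hFz hΦ).norm
  have h0 : Φ 0 0 = z := by simp [Φ]
  have hlim := hc.tendsto.mono_left (nhdsWithin_le_nhds (s := Set.Ioi 0))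
  simp only [h0] at hlim
  refine le_of_tendsto hlim ?_
  filter_upwards [Ioo_mem_nhdsGT (show (0:ℝ) < 1 / 8 by norm_num)] with ε hε
  exact key ε hε.1 hε.2

theorem tri_s9 (F : ℂ × ℂ → ℂ) (H : Set (ℝ × ℝ)) (hH : Convex ℝ H)
    (hF : ∀ z : ℂ × ℂ, (z.1.re, z.2.re) ∈ H → DifferentiableAt ℂ F z)
    (M : ℝ) (o p q : ℝ × ℝ) (ho : o ∈ H) (hp : p ∈ H) (hq : q ∈ H)
    (h1 : ∀ z : ℂ × ℂ, (z.1.re, z.2.re) ∈ segment ℝ p o → ‖F z‖ ≤ M)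
    (h2 : ∀ z : ℂ × ℂ, (z.1.re, z.2.re) ∈ segment ℝ o q → ‖F z‖ ≤ M)
    (z : ℂ × ℂ) (hz : (z.1.re, z.2.re) ∈ segment ℝ p q) : ‖F z‖ ≤ M := by
  obtain ⟨a, b, ha, hb, hab, he⟩ := hz
  rcases ha.eq_or_lt with rfl | ha
  · obtain rfl : b = 1 := by linarith
    apply h2; rw [← he]; simpa using right_mem_segment ℝ o q
  rcases hb.eq_or_lt with rfl | hb
  · obtain rfl : a = 1 := by linarith
    apply h1; rw [← he]; simpa using left_mem_segment ℝ p o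
  obtain ⟨o1, o2⟩ := o
  obtain ⟨p1, p2⟩ := p
  obtain ⟨q1, q2⟩ := q
  simp [Prod.ext_iff] at he
  refine tri_aux F H hH hF M o1 o2 p1 p2 q1 q2 ho hp hq ?_ a b ha hb hab z ?_ ?_
  · intro x y hx hy hxy h w hw1 hw2
    rcases h with rfl | rfl
    · apply h2
      refine ⟨1 - y, y, by linarith, hy, by ring, ?_⟩
      simp [Prod.ext_iff, hw1, hw2]; constructor <;> ring
    · apply h1
      refine ⟨x, 1 - x, hx, by linarith, by ring, ?_⟩
      simp [Prod.ext_iff, hw1, hw2]; constructor <;> ring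
  · rw [← he.1]; linear_combination o1 * hab
  · rw [← he.2]; linear_combination o2 * hab

theorem pow_bd (N u x : ℝ) (hN : 0 ≤ x) (hx : x ≤ N) : (1 + |u|) ^ x ≤ Real.exp (N ^ 2 / 2 + u ^ 2 / 2) := by
  have h1 : 1 + |u| ≤ Real.exp |u| := by linarith [Real.add_one_le_exp |u|]
  calc (1 + |u|) ^ x ≤ (Real.exp |u|) ^ x :=
        Real.rpow_le_rpow (by positivity) h1 hN
    _ = Real.exp (|u| * x) := by rw [← Real.exp_mul]
    _ ≤ _ := by
      apply Real.exp_le_exp.2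
      rw [← sq_abs u]
      nlinarith [sq_nonneg (|u| - N), mul_le_mul_of_nonneg_left hx (abs_nonneg u)]

theorem growth (U : Set (ℝ × ℝ)) (hU : IsOpen U) (hUc : IsConnected U) (g : ℂ × ℂ → ℂ)
    (hg : ∀ z : ℂ × ℂ, (z.1.re, z.2.re) ∈ convexHull ℝ U → DifferentiableAt ℂ g z)
    (K : ℝ) (hK : 0 ≤ K)
    (hb : ∀ z : ℂ × ℂ, (z.1.re, z.2.re) ∈ U → ‖g z‖ ≤ K * Real.exp (z.1.im ^ 2 + z.2.im ^ 2))
    (p q : ℝ × ℝ) (hp : p ∈ U) (hq : q ∈ U) :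
    ∃ M : ℝ, 0 ≤ M ∧ ∀ z : ℂ × ℂ, (z.1.re, z.2.re) ∈ segment ℝ p q →
      ‖g z‖ ≤ M * Real.exp (z.1.im ^ 2 + z.2.im ^ 2) := by
  obtain ⟨γ, hγ⟩ := (hU.isConnected_iff_isPathConnected.1 hUc).joinedIn p hp q hq
  have hcomp : IsCompact (Set.range γ) := isCompact_range γ.continuous
  obtain ⟨δ, hδ, hsub⟩ := hcomp.exists_thickening_subset_open hU
    (by rintro _ ⟨x, rfl⟩; exact hγ x)
  obtain ⟨R, hR⟩ := isBounded_iff_forall_norm_le.1 (hcomp.isBounded.thickening (δ := δ))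
  let F : ℂ × ℂ → ℂ := fun z => g z * Complex.exp (z.1 ^ 2 + z.2 ^ 2)
  have hnF : ∀ z : ℂ × ℂ, ‖F z‖ = ‖g z‖ *
      Real.exp (z.1.re ^ 2 + z.2.re ^ 2 - (z.1.im ^ 2 + z.2.im ^ 2)) := by
    intro z
    simp only [F, norm_mul, Complex.norm_exp]
    congr 2
    simp [pow_two]; ring
  have hF : ∀ z : ℂ × ℂ, (z.1.re, z.2.re) ∈ convexHull ℝ U → DifferentiableAt ℂ F z := by
    intro z hz
    have := hg z hz
    simp only [F]; fun_prop
  have hFb : ∀ z : ℂ × ℂ, (z.1.re, z.2.re) ∈ Metric.thickening δ (Set.range γ) →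
      ‖F z‖ ≤ K * Real.exp (R ^ 2 + R ^ 2) := by
    intro z hz
    have h1 := hb z (hsub hz)
    have h2 := hR _ hz
    rw [Prod.norm_def, max_le_iff, Real.norm_eq_abs, Real.norm_eq_abs] at h2
    have h3 : z.1.re ^ 2 ≤ R ^ 2 := by
      rw [← sq_abs]; exact pow_le_pow_left₀ (abs_nonneg _) h2.1 2
    have h4 : z.2.re ^ 2 ≤ R ^ 2 := by
      rw [← sq_abs]; exact pow_le_pow_left₀ (abs_nonneg _) h2.2 2
    rw [hnF]
    calc _ ≤ (K * Real.exp (z.1.im ^ 2 + z.2.im ^ 2)) *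
        Real.exp (z.1.re ^ 2 + z.2.re ^ 2 - (z.1.im ^ 2 + z.2.im ^ 2)) := by gcongr
      _ = K * Real.exp (z.1.re ^ 2 + z.2.re ^ 2) := by
        rw [mul_assoc, ← Real.exp_add]; congr 2; ring
      _ ≤ _ := by gcongr
  set M := K * Real.exp (R ^ 2 + R ^ 2) with hM
  have hM0 : 0 ≤ M := by positivity
  let S : Set unitInterval := {τ | ∀ z : ℂ × ℂ, (z.1.re, z.2.re) ∈ segment ℝ p (γ τ) → ‖F z‖ ≤ M}
  have hmem : ∀ τ, γ τ ∈ convexHull ℝ U := fun τ => subset_convexHull ℝ U (hγ τ)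
  have hstep : ∀ τ τ', dist (γ τ) (γ τ') < δ → τ ∈ S → τ' ∈ S := by
    intro τ τ' hd hτ
    refine tri_s9 F _ (convex_convexHull ℝ U) hF M (γ τ) p (γ τ') (hmem τ)
      (subset_convexHull ℝ U hp) (hmem τ') hτ ?_
    intro z hz
    apply hFb
    have h1 : segment ℝ (γ τ) (γ τ') ⊆ Metric.ball (γ τ) δ :=
      (convex_ball (γ τ) δ).segment_subset (Metric.mem_ball_self hδ)
        (by rw [Metric.mem_ball, dist_comm]; exact hd)
    rw [Metric.mem_thickening_iff]
    exact ⟨γ τ, ⟨τ, rfl⟩, h1 hz⟩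
  have hnear : ∀ τ, ∀ᶠ τ' in nhds τ, dist (γ τ') (γ τ) < δ := fun τ =>
    (γ.continuous.tendsto τ).eventually (Metric.ball_mem_nhds _ hδ)
  have hclopen : IsClopen S := by
    constructor
    · rw [← isOpen_compl_iff, isOpen_iff_mem_nhds]
      intro τ hτ
      filter_upwards [hnear τ] with τ' h hS
      exact hτ (hstep τ' τ h hS)
    · rw [isOpen_iff_mem_nhds]
      intro τ hτ
      filter_upwards [hnear τ] with τ' h
      exact hstep τ τ' (by rwa [dist_comm]) hτ
  have hne : S.Nonempty := by
    refine ⟨0, fun z hz => hFb z ?_⟩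
    rw [γ.source, segment_same] at hz
    rw [Set.mem_singleton_iff.1 hz]
    exact Metric.self_subset_thickening hδ _ ⟨0, γ.source⟩
  have h1 : (1 : unitInterval) ∈ S := by rw [hclopen.eq_univ hne]; trivial
  refine ⟨M, hM0, fun z hz => ?_⟩
  have h2 := h1 z (by rwa [γ.target])
  rw [hnF] at h2
  have h3 : 1 ≤ Real.exp (z.1.re ^ 2 + z.2.re ^ 2) := Real.one_le_exp (by positivity)
  calc ‖g z‖ ≤ ‖g z‖ * Real.exp (z.1.re ^ 2 + z.2.re ^ 2) :=
        le_mul_of_one_le_right (norm_nonneg _) h3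
    _ = (‖g z‖ * Real.exp (z.1.re ^ 2 + z.2.re ^ 2 - (z.1.im ^ 2 + z.2.im ^ 2))) *
        Real.exp (z.1.im ^ 2 + z.2.im ^ 2) := by
        rw [mul_assoc, ← Real.exp_add]; congr 2; ring
    _ ≤ _ := by gcongr

theorem shift_bd (S v d α : ℝ) (hα : 0 ≤ α) :
    (1 + |S + v * d|) ^ α ≤ Real.exp (α * Real.log ((1 + |S|) * (1 + |d|))) * (1 + |v|) ^ α := by
  have hA : 0 < (1 + |S|) * (1 + |d|) := by positivity
  rw [mul_comm α, ← Real.rpow_def_of_pos hA, ← Real.mul_rpow hA.le (by positivity)]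
  apply Real.rpow_le_rpow (by positivity) _ hα
  have h1 : |S + v * d| ≤ |S| + |v| * |d| := by
    rw [← abs_mul]; exact abs_add_le _ _
  have := mul_nonneg (abs_nonneg S) (abs_nonneg d)
  have := mul_nonneg (abs_nonneg S) (abs_nonneg v)
  have := mul_nonneg (mul_nonneg (abs_nonneg S) (abs_nonneg d)) (abs_nonneg v)
  nlinarith [abs_nonneg S, abs_nonneg v, abs_nonneg d]

theorem edge_bd (C N α β S W v d e : ℝ) (hC : 0 ≤ C) (hα : 0 ≤ α) (hβ : 0 ≤ β) (hαN : α ≤ N)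
    (hβN : β ≤ N) :
    C * (1 + |S + v * d|) ^ α * (1 + |W + v * e|) ^ β ≤
      C * Real.exp (N ^ 2 + v ^ 2 + (α * Real.log ((1 + |S|) * (1 + |d|))
        + β * Real.log ((1 + |W|) * (1 + |e|)))) := by
  have h1 := (shift_bd S v d α hα).trans (mul_le_mul_of_nonneg_left (pow_bd N v α hα hαN)
    (Real.exp_pos _).le)
  have h2 := (shift_bd W v e β hβ).trans (mul_le_mul_of_nonneg_left (pow_bd N v β hβ hβN)
    (Real.exp_pos _).le)
  rw [mul_assoc]
  apply mul_le_mul_of_nonneg_left _ hC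
  refine (mul_le_mul h1 h2 (by positivity) (by positivity)).trans (le_of_eq ?_)
  simp only [← Real.exp_add]
  congr 1; ring

theorem final (g : ℂ × ℂ → ℂ) (α₁ β₁ α₂ β₂ C₁ C₂ N : ℝ)
    (hα₁ : 0 < α₁) (hβ₁ : 0 < β₁) (hα₂ : 0 < α₂) (hβ₂ : 0 < β₂)
    (hC₁ : 0 < C₁) (hC₂ : 0 < C₂) (hN : N = α₁ + β₁ + α₂ + β₂)
    (x₁ y₁ x₂ y₂ t : ℝ) (ht0 : 0 ≤ t) (ht1 : t ≤ 1) (s w : ℂ)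
    (hs : s.re = t * x₁ + (1 - t) * x₂) (hw : w.re = t * y₁ + (1 - t) * y₂)
    (hd : ∀ z : ℂ × ℂ, (z.1.re, z.2.re) ∈ segment ℝ (x₁, y₁) (x₂, y₂) → DifferentiableAt ℂ g z)
    (M : ℝ) (hM : 0 ≤ M)
    (hgr : ∀ z : ℂ × ℂ, (z.1.re, z.2.re) ∈ segment ℝ (x₁, y₁) (x₂, y₂) →
      ‖g z‖ ≤ M * Real.exp (z.1.im ^ 2 + z.2.im ^ 2))
    (h1 : ∀ z : ℂ × ℂ, (z.1.re, z.2.re) = (x₁, y₁) →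
      ‖g z‖ ≤ C₁ * (1 + |z.1.im|) ^ α₁ * (1 + |z.2.im|) ^ β₁)
    (h2 : ∀ z : ℂ × ℂ, (z.1.re, z.2.re) = (x₂, y₂) →
      ‖g z‖ ≤ C₂ * (1 + |z.1.im|) ^ α₂ * (1 + |z.2.im|) ^ β₂) :
    ‖g (s, w)‖ ≤ (C₁ + C₂) * Real.exp (1 + N ^ 2) * (1 + |s.im|) ^ (t * α₁ + (1 - t) * α₂)
              * (1 + |w.im|) ^ (t * β₁ + (1 - t) * β₂)
              * (1 + |x₁ - x₂|) ^ (t * α₁ + (1 - t) * α₂)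
              * (1 + |y₁ - y₂|) ^ (t * β₁ + (1 - t) * β₂) := by
  set lA := Real.log ((1 + |s.im|) * (1 + |x₁ - x₂|)) with hlA
  set lB := Real.log ((1 + |w.im|) * (1 + |y₁ - y₂|)) with hlB
  have hlA0 : 0 ≤ lA := Real.log_nonneg (by nlinarith [abs_nonneg s.im, abs_nonneg (x₁ - x₂)])
  have hlB0 : 0 ≤ lB := Real.log_nonneg (by nlinarith [abs_nonneg w.im, abs_nonneg (y₁ - y₂)])
  set P₁ := α₁ * lA + β₁ * lB with hP₁
  set P₂ := α₂ * lA + β₂ * lB with hP₂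
  have hP₁0 : 0 ≤ P₁ := by positivity
  have hP₂0 : 0 ≤ P₂ := by positivity
  let φ : ℂ → ℂ × ℂ := fun z =>
    (s + (z - t) * ((x₁ - x₂ : ℝ) : ℂ), w + (z - t) * ((y₁ - y₂ : ℝ) : ℂ))
  have hφre : ∀ z, ((φ z).1.re, (φ z).2.re) =
      (x₂ + z.re * (x₁ - x₂), y₂ + z.re * (y₁ - y₂)) := by
    intro z
    simp [φ, hs, hw]; constructor <;> ring
  have hφ1 : ∀ z, (φ z).1.im = s.im + z.im * (x₁ - x₂) := by intro z; simp [φ]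
  have hφ2 : ∀ z, (φ z).2.im = w.im + z.im * (y₁ - y₂) := by intro z; simp [φ]
  have hseg : ∀ z : ℂ, 0 ≤ z.re → z.re ≤ 1 →
      ((φ z).1.re, (φ z).2.re) ∈ segment ℝ (x₁, y₁) (x₂, y₂) := by
    intro z h0 h1
    rw [hφre]
    refine ⟨z.re, 1 - z.re, h0, by linarith, by ring, ?_⟩
    simp; constructor <;> ring
  let h : ℂ → ℂ := fun z => g (φ z) * Complex.exp ((z - t) ^ 2 - (z * P₁ + (1 - z) * P₂))
  have hnh : ∀ z, ‖h z‖ = ‖g (φ z)‖ *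
      Real.exp ((z.re - t) ^ 2 - z.im ^ 2 - (z.re * P₁ + (1 - z.re) * P₂)) := by
    intro z
    simp only [h, norm_mul, Complex.norm_exp]
    congr 2
    simp [pow_two]
  have hsq : ∀ x : ℝ, 0 ≤ x → x ≤ 1 → (x - t) ^ 2 ≤ 1 := by
    intro x h0 h1
    nlinarith
  have hdiff : DiffContOnCl ℂ h (re ⁻¹' Set.Ioo 0 1) := by
    apply DifferentiableOn.diffContOnCl
    intro z hz
    have hz' : z ∈ re ⁻¹' Set.Icc (0:ℝ) 1 := by
      refine closure_minimal ?_ (isClosed_Icc.preimage Complex.continuous_re) hz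
      exact Set.preimage_mono Set.Ioo_subset_Icc_self
    have e1 := hd _ (hseg z hz'.1 hz'.2)
    have e2 : DifferentiableAt ℂ φ z := by simp only [φ]; fun_prop
    have e3 : DifferentiableAt ℂ (fun z => g (φ z)) z := e1.comp z e2
    have e4 : DifferentiableAt ℂ h z := by simp only [h]; fun_prop
    exact e4.differentiableWithinAt
  have hmain : ‖h t‖ ≤ (C₁ + C₂) * Real.exp (1 + N ^ 2) := by
    refine PhragmenLindelof.vertical_strip (a := 0) (b := 1) hdiff ?_ ?_ ?_
      (by simpa using ht0) (by simpa using ht1)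
    · set Q := 2 * s.im ^ 2 + 2 * (x₁ - x₂) ^ 2 + 2 * w.im ^ 2 + 2 * (y₁ - y₂) ^ 2 with hQ
      refine ⟨1, by simpa using by linarith [Real.pi_gt_three], Q * 2, ?_⟩
      apply Asymptotics.IsBigO.of_bound (M * Real.exp 1)
      refine Filter.Eventually.filter_mono inf_le_right ?_
      rw [Filter.eventually_principal]
      intro z hz
      have hz0 := hz.1.le
      have hz1 := hz.2.le
      rw [hnh, Real.norm_eq_abs, abs_of_pos (Real.exp_pos _), mul_assoc, ← Real.exp_add]
      refine (mul_le_mul_of_nonneg_right (hgr _ (hseg z hz0 hz1)) (Real.exp_pos _).le).trans ?_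
      rw [mul_assoc, ← Real.exp_add, hφ1, hφ2]
      apply mul_le_mul_of_nonneg_left _ hM
      apply Real.exp_le_exp.2
      have hL : 0 ≤ z.re * P₁ + (1 - z.re) * P₂ :=
        add_nonneg (mul_nonneg hz0 hP₁0) (mul_nonneg (by linarith) hP₂0)
      have hv : 1 + z.im ^ 2 ≤ 2 * Real.exp |z.im| := by
        have := Real.quadratic_le_exp_of_nonneg (abs_nonneg z.im)
        rw [sq_abs] at this
        nlinarith [abs_nonneg z.im]
      have hQ0 : 0 ≤ Q := by positivity
      have hQ1 := mul_le_mul_of_nonneg_left hv hQ0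
      have hq1 : (s.im + z.im * (x₁ - x₂)) ^ 2 + (w.im + z.im * (y₁ - y₂)) ^ 2
          ≤ Q * (1 + z.im ^ 2) := by
        have a1 := sq_nonneg (s.im - z.im * (x₁ - x₂))
        have a2 := sq_nonneg (w.im - z.im * (y₁ - y₂))
        have a3 := sq_nonneg (s.im * z.im)
        have a4 := sq_nonneg (w.im * z.im)
        rw [hQ]
        nlinarith [sq_nonneg (x₁ - x₂), sq_nonneg (y₁ - y₂)]
      have := hsq z.re hz0 hz1
      rw [one_mul]
      linarith [sq_nonneg z.im]
    · intro z hz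
      have e1 := h2 (φ z) (by rw [hφre, hz]; simp)
      rw [hφ1, hφ2] at e1
      have e2 := e1.trans (edge_bd C₂ N α₂ β₂ s.im w.im z.im (x₁ - x₂) (y₁ - y₂) hC₂.le hα₂.le hβ₂.le
        (by linarith) (by linarith))
      rw [hnh]
      refine (mul_le_mul_of_nonneg_right e2 (Real.exp_pos _).le).trans ?_
      rw [mul_assoc, ← Real.exp_add]
      refine mul_le_mul (by linarith) (Real.exp_le_exp.2 ?_) (Real.exp_pos _).le (by linarith)
      have := hsq z.re (by linarith) (by linarith)
      rw [hz] at this ⊢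
      rw [← hlA, ← hlB, ← hP₂]
      linarith
    · intro z hz
      have e1 := h1 (φ z) (by rw [hφre, hz]; simp)
      rw [hφ1, hφ2] at e1
      have e2 := e1.trans (edge_bd C₁ N α₁ β₁ s.im w.im z.im (x₁ - x₂) (y₁ - y₂) hC₁.le hα₁.le hβ₁.le
        (by linarith) (by linarith))
      rw [hnh]
      refine (mul_le_mul_of_nonneg_right e2 (Real.exp_pos _).le).trans ?_
      rw [mul_assoc, ← Real.exp_add]
      refine mul_le_mul (by linarith) (Real.exp_le_exp.2 ?_) (Real.exp_pos _).le (by linarith)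
      have := hsq z.re (by linarith) (by linarith)
      rw [hz] at this ⊢
      rw [← hlA, ← hlB, ← hP₁]
      linarith
  have hφt : φ t = (s, w) := by simp [φ]
  rw [hnh, hφt] at hmain
  simp only [Complex.ofReal_re, Complex.ofReal_im, sub_self] at hmain
  have hA : 0 < (1 + |s.im|) * (1 + |x₁ - x₂|) := by positivity
  have hB : 0 < (1 + |w.im|) * (1 + |y₁ - y₂|) := by positivity
  have eA : (1 + |s.im|) ^ (t * α₁ + (1 - t) * α₂) * (1 + |x₁ - x₂|) ^ (t * α₁ + (1 - t) * α₂)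
      = Real.exp (lA * (t * α₁ + (1 - t) * α₂)) := by
    rw [← Real.mul_rpow (by positivity) (by positivity), Real.rpow_def_of_pos hA]
  have eB : (1 + |w.im|) ^ (t * β₁ + (1 - t) * β₂) * (1 + |y₁ - y₂|) ^ (t * β₁ + (1 - t) * β₂)
      = Real.exp (lB * (t * β₁ + (1 - t) * β₂)) := by
    rw [← Real.mul_rpow (by positivity) (by positivity), Real.rpow_def_of_pos hB]
  calc ‖g (s, w)‖ = (‖g (s, w)‖ * Real.exp (0 - (t * P₁ + (1 - t) * P₂))) *
        Real.exp (t * P₁ + (1 - t) * P₂) := by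
        rw [mul_assoc, ← Real.exp_add]; simp
    _ ≤ ((C₁ + C₂) * Real.exp (1 + N ^ 2)) * Real.exp (t * P₁ + (1 - t) * P₂) := 
        mul_le_mul_of_nonneg_right hmain (Real.exp_pos _).le
    _ = ((C₁ + C₂) * Real.exp (1 + N ^ 2)) * (Real.exp (lA * (t * α₁ + (1 - t) * α₂)) *
          Real.exp (lB * (t * β₁ + (1 - t) * β₂))) := by
        rw [← Real.exp_add (lA * _)]; congr 2; rw [hP₁, hP₂]; ring
    _ = _ := by rw [← eA, ← eB]; ring




/-- Phragmén–Lindelöf interpolation of polynomial bounds on two overlapping tube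
domains to the tube over the convex hull, with an absolute constant depending only on the data
`C₁, C₂, α₁, β₁, α₂, β₂`. -/
theorem statement9
    (α₁ β₁ α₂ β₂ C₁ C₂ : ℝ)
    (hα₁ : 0 < α₁) (hβ₁ : 0 < β₁) (hα₂ : 0 < α₂) (hβ₂ : 0 < β₂)
    (hC₁ : 0 < C₁) (hC₂ : 0 < C₂) :
    ∃ C : ℝ, 0 < C ∧
      ∀ (U₁ U₂ : Set (ℝ × ℝ)),
        IsOpen U₁ → IsConnected U₁ → IsOpen U₂ → IsConnected U₂ → (U₁ ∩ U₂).Nonempty →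
        ∀ g : ℂ × ℂ → ℂ,
          DifferentiableOn ℂ g {p : ℂ × ℂ | (p.1.re, p.2.re) ∈ convexHull ℝ (U₁ ∪ U₂)} →
          (∀ p : ℂ × ℂ, (p.1.re, p.2.re) ∈ U₁ →
            ‖g p‖ ≤ C₁ * (1 + |p.1.im|) ^ α₁ * (1 + |p.2.im|) ^ β₁) →
          (∀ p : ℂ × ℂ, (p.1.re, p.2.re) ∈ U₂ →
            ‖g p‖ ≤ C₂ * (1 + |p.1.im|) ^ α₂ * (1 + |p.2.im|) ^ β₂) →
          ∀ (s w s₁ w₁ s₂ w₂ : ℂ) (t : ℝ), 0 ≤ t → t ≤ 1 →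
            (s.re, w.re) ∈ convexHull ℝ (U₁ ∪ U₂) →
            (s₁.re, w₁.re) ∈ U₁ → (s₂.re, w₂.re) ∈ U₂ →
            s = (t : ℂ) * s₁ + (1 - (t : ℂ)) * s₂ →
            w = (t : ℂ) * w₁ + (1 - (t : ℂ)) * w₂ →
            ‖g (s, w)‖ ≤ C * (1 + |s.im|) ^ (t * α₁ + (1 - t) * α₂)
              * (1 + |w.im|) ^ (t * β₁ + (1 - t) * β₂)
              * (1 + |s₁.re - s₂.re|) ^ (t * α₁ + (1 - t) * α₂)
              * (1 + |w₁.re - w₂.re|) ^ (t * β₁ + (1 - t) * β₂) := by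
  refine ⟨(C₁ + C₂) * Real.exp (1 + (α₁ + β₁ + α₂ + β₂) ^ 2), by positivity, ?_⟩
  intro U₁ U₂ ho₁ hc₁ ho₂ hc₂ hne g hg hb₁ hb₂ s w s₁ w₁ s₂ w₂ t ht0 ht1 _ hm₁ hm₂ hs hw
  set N := α₁ + β₁ + α₂ + β₂ with hN
  have hH : IsOpen (convexHull ℝ (U₁ ∪ U₂)) := (ho₁.union ho₂).convexHull
  have hopen : IsOpen {p : ℂ × ℂ | (p.1.re, p.2.re) ∈ convexHull ℝ (U₁ ∪ U₂)} :=
    hH.preimage (f := fun p : ℂ × ℂ => (p.1.re, p.2.re)) (by fun_prop)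
  have hd : ∀ z : ℂ × ℂ, (z.1.re, z.2.re) ∈ convexHull ℝ (U₁ ∪ U₂) → DifferentiableAt ℂ g z :=
    fun z hz => (hg z hz).differentiableAt (hopen.mem_nhds hz)
  have hexp : ∀ C α β a b : ℝ, 0 < C → C ≤ C₁ + C₂ → 0 < α → 0 < β → α ≤ N → β ≤ N →
      C * (1 + |a|) ^ α * (1 + |b|) ^ β ≤
        (C₁ + C₂) * Real.exp (N ^ 2) * Real.exp (a ^ 2 + b ^ 2) := by
    intro C α β a b hC hC' hα hβ hαN hβN
    rw [mul_assoc, mul_assoc, ← Real.exp_add]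
    refine mul_le_mul hC' ?_ (by positivity) (by positivity)
    refine (mul_le_mul (pow_bd N a α hα.le hαN) (pow_bd N b β hβ.le hβN) (by positivity)
      (by positivity)).trans ?_
    rw [← Real.exp_add]
    apply Real.exp_le_exp.2
    nlinarith [sq_nonneg a, sq_nonneg b]
  have hseg : segment ℝ (s₁.re, w₁.re) (s₂.re, w₂.re) ⊆ convexHull ℝ (U₁ ∪ U₂) :=
    (convex_convexHull ℝ _).segment_subset (subset_convexHull ℝ _ (Or.inl hm₁))
      (subset_convexHull ℝ _ (Or.inr hm₂))
  obtain ⟨M, hM, hgr⟩ := growth (U₁ ∪ U₂) (ho₁.union ho₂) (IsConnected.union hne hc₁ hc₂) g hd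
    ((C₁ + C₂) * Real.exp (N ^ 2)) (by positivity)
    (by
      rintro z (hz | hz)
      · exact (hb₁ z hz).trans (hexp _ _ _ _ _ hC₁ (by linarith) hα₁ hβ₁ (by linarith)
          (by linarith))
      · exact (hb₂ z hz).trans (hexp _ _ _ _ _ hC₂ (by linarith) hα₂ hβ₂ (by linarith)
          (by linarith)))
    (s₁.re, w₁.re) (s₂.re, w₂.re) (Or.inl hm₁) (Or.inr hm₂)
  exact final g α₁ β₁ α₂ β₂ C₁ C₂ N hα₁ hβ₁ hα₂ hβ₂ hC₁ hC₂ hN s₁.re w₁.re s₂.re w₂.re t ht0 ht1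
    s w (by rw [hs]; simp) (by rw [hw]; simp) (fun z hz => hd z (hseg hz)) M hM hgr
    (fun z hz => hb₁ z (by rw [hz]; exact hm₁)) (fun z hz => hb₂ z (by rw [hz]; exact hm₂))
end
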